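/- A discrete group G is C*-simple if and only if for every bounded linear functional φ on C*_λ(G), the weak* closed convex hull of the orbit {g·φ : g ∈ G} contains φ(1)·τ_λ. -/

import Mathlib

noncomputable section
open scoped ENNReal ComplexOrder lp
open MeasureTheory
set_option maxHeartbeats 1000000
set_option synthInstance.maxHeartbeats 1000000

universe u

variable {G : Type u} [Group G]

theorem translat_mem (g : G) (f : ℓ²(G, ℂ)) : Memℓp (fun h => f (g⁻¹ * h)) 2 := by
  have hf : Summable fun i : G => ‖f i‖ ^ (2 : ℝ≥0∞).toReal :=
    (memℓp_gen_iff (by norm_num)).1 (lp.memℓp f)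
  exact memℓp_gen ((Equiv.mulLeft g⁻¹).summable_iff.2 hf)

/-- The left regular representation of `g ∈ G` as a linear isometric bijection of `ℓ²(G)`,
given by `(λ_g ξ)(h) = ξ(g⁻¹ h)`. -/
def lregE (g : G) : ℓ²(G, ℂ) ≃ₗᵢ[ℂ] ℓ²(G, ℂ) :=
{ toFun := fun f => ⟨fun h => f (g⁻¹ * h), translat_mem g f⟩
  invFun := fun f => ⟨fun h => f (g * h), by
    have := translat_mem g⁻¹ f; rw [inv_inv] at this; exact this⟩
  map_add' := by intro f₁ f₂; ext h; simp [lp.coeFn_add]; rfl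
  map_smul' := by intro c f; ext h; simp [lp.coeFn_smul]
  left_inv := by intro f; ext h; simp
  right_inv := by intro f; ext h; simp
  norm_map' := by
    intro f
    rw [lp.norm_eq_tsum_rpow (by norm_num) f, lp.norm_eq_tsum_rpow (by norm_num)]
    congr 1
    exact (Equiv.mulLeft g⁻¹).tsum_eq (fun h => ‖f h‖ ^ (2 : ℝ≥0∞).toReal) }

/-- The left regular representation `λ` as bounded operators on `ℓ²(G)`. -/
def lreg (g : G) : ℓ²(G, ℂ) →L[ℂ] ℓ²(G, ℂ) :=
  (lregE g).toContinuousLinearEquiv.toContinuousLinearMap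

variable (G) in
/-- The reduced group C*-algebra `C*_λ(G)`: the norm-closed star subalgebra of the algebra of
bounded operators on `ℓ²(G)` generated by the image of the left regular representation. -/
def redCstar : StarSubalgebra ℂ (ℓ²(G, ℂ) →L[ℂ] ℓ²(G, ℂ)) :=
  (StarAlgebra.adjoin ℂ (Set.range (lreg (G := G)))).topologicalClosure

/-- `λ_g` as an element of the reduced group C*-algebra. -/
def uu (g : G) : redCstar G :=
  ⟨lreg g, StarSubalgebra.le_topologicalClosure _ (StarAlgebra.subset_adjoin ℂ _ ⟨g, rfl⟩)⟩

variable (G) in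
/-- `G` is C*-simple: `C*_λ(G)` has no closed two-sided ideals other than `{0}` and the
whole algebra. -/
def IsCstarSimple : Prop :=
  ∀ I : TwoSidedIdeal (redCstar G), IsClosed (I : Set (redCstar G)) → I = ⊥ ∨ I = ⊤

/-- The vector `δ_e ∈ ℓ²(G)`. -/
def deltaOne : ℓ²(G, ℂ) := letI := Classical.decEq G; lp.single 2 (1 : G) 1

variable (G) in
/-- The canonical tracial state `τ_λ(a) = ⟨a δ_e, δ_e⟩` on the reduced C*-algebra, as a
weak* continuous linear functional. -/
def tau : WeakDual ℂ (redCstar G) :=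
  (innerSL ℂ (deltaOne (G := G))).comp
    ((ContinuousLinearMap.apply ℂ ℓ²(G, ℂ) (deltaOne (G := G))).comp
      { toLinearMap := (redCstar G).subtype.toLinearMap, cont := continuous_subtype_val })

attribute [irreducible] redCstar lreg lregE deltaOne uu tau

/-- The action of `G` on the dual of `C*_λ(G)`: `(g·φ)(a) = φ(λ_g⁻¹ a λ_g)`. -/
def dualAct (g : G) (φ : WeakDual ℂ (redCstar G)) : WeakDual ℂ (redCstar G) :=
{ toFun := fun a => φ (uu g⁻¹ * a * uu g)
  map_add' := by
    intro a b
    show φ (uu g⁻¹ * (a + b) * uu g) = φ (uu g⁻¹ * a * uu g) + φ (uu g⁻¹ * b * uu g)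
    rw [mul_add, add_mul, map_add]
  map_smul' := by
    intro c a
    show φ (uu g⁻¹ * (c • a) * uu g) = c • φ (uu g⁻¹ * a * uu g)
    rw [mul_smul_comm, smul_mul_assoc, _root_.map_smul]
  cont := (map_continuous φ).comp
      ((continuous_const.mul continuous_id).mul continuous_const) }

theorem dualAct_continuous (g : G) : Continuous (dualAct (G := G) g) := by
  apply WeakDual.continuous_of_continuous_eval
  intro a
  exact WeakDual.eval_continuous (uu g⁻¹ * a * uu g)

set_option linter.all false
set_option linter.deprecated false

/-! ### Basic facts on the regular representation -/

abbrev Bop (G : Type u) := ℓ²(G, ℂ) →L[ℂ] ℓ²(G, ℂ)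

theorem lreg_apply (g : G) (ξ : ℓ²(G, ℂ)) (h : G) : lreg g ξ h = ξ (g⁻¹ * h) := by
  unfold lreg lregE
  rfl

theorem lreg_mul (g h : G) : lreg (g * h) = lreg g * lreg h := by
  ext ξ k
  simp [lreg_apply, mul_assoc]

theorem lreg_one : lreg (1 : G) = 1 := by
  ext ξ k
  simp [lreg_apply]

theorem inner_eq_tsum (ξ η : ℓ²(G, ℂ)) : inner ℂ ξ η = ∑' g, inner ℂ (ξ g) (η g) :=
  lp.inner_eq_tsum ξ η

theorem lreg_star (g : G) : star (lreg g) = lreg g⁻¹ := by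
  rw [ContinuousLinearMap.star_eq_adjoint]
  symm
  rw [ContinuousLinearMap.eq_adjoint_iff]
  intro ξ η
  rw [inner_eq_tsum, inner_eq_tsum, ← (Equiv.mulLeft g⁻¹).tsum_eq]
  congr 1
  ext h
  simp [lreg_apply]

theorem norm_lreg_le (g : G) : ‖(lreg g : Bop G)‖ ≤ 1 := by
  unfold lreg
  exact (lregE g).toLinearIsometry.norm_toContinuousLinearMap_le

theorem coe_uu (g : G) : ((uu g : redCstar G) : Bop G) = lreg g := by
  unfold uu
  rfl

theorem uu_mul (g h : G) : (uu (g * h) : redCstar G) = uu g * uu h := by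
  apply Subtype.ext
  simp [coe_uu, lreg_mul]

theorem uu_one : (uu (1 : G) : redCstar G) = 1 := by
  apply Subtype.ext
  simp [coe_uu, lreg_one]

theorem redCstar_isClosed : IsClosed (redCstar G : Set (Bop G)) := by
  unfold redCstar
  exact StarSubalgebra.isClosed_topologicalClosure _

theorem adjoin_le_span (T : Bop G) (hT : T ∈ StarAlgebra.adjoin ℂ (Set.range (lreg (G := G)))) :
    T ∈ Submodule.span ℂ (Set.range (lreg (G := G))) := by
  induction hT using StarAlgebra.adjoin_induction with
  | mem x hx => exact Submodule.subset_span hx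
  | algebraMap r =>
    rw [Algebra.algebraMap_eq_smul_one, ← lreg_one]
    exact Submodule.smul_mem _ _ (Submodule.subset_span ⟨1, rfl⟩)
  | add x y hx hy ihx ihy => exact Submodule.add_mem _ ihx ihy
  | mul x y hx hy ihx ihy =>
    have := Submodule.mul_mem_mul ihx ihy
    rw [Submodule.span_mul_span] at this
    refine Submodule.span_mono ?_ this
    rintro _ ⟨_, ⟨g, rfl⟩, _, ⟨h, rfl⟩, rfl⟩
    exact ⟨g * h, lreg_mul g h⟩
  | star x hx ih =>
    clear hx
    induction ih using Submodule.span_induction with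
    | mem x hx =>
      obtain ⟨g, rfl⟩ := hx
      exact Submodule.subset_span ⟨g⁻¹, (lreg_star g).symm⟩
    | zero => simp
    | add x y _ _ h1 h2 => rw [star_add]; exact Submodule.add_mem _ h1 h2
    | smul c x _ h => rw [star_smul]; exact Submodule.smul_mem _ _ h

theorem coe_mem_closure_span (a : redCstar G) :
    (a : Bop G) ∈ closure (Submodule.span ℂ (Set.range (lreg (G := G))) : Set (Bop G)) := by
  have h := a.2
  unfold redCstar at h
  have h' : (a : Bop G) ∈ closure (StarAlgebra.adjoin ℂ (Set.range (lreg (G := G))) : Set (Bop G)) := by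
    rw [← StarSubalgebra.topologicalClosure_coe]; exact h
  exact closure_mono (fun T hT => adjoin_le_span T hT) h'

theorem span_uu_dense (a : redCstar G) (ε : ℝ) (hε : 0 < ε) :
    ∃ b ∈ Submodule.span ℂ (Set.range (uu (G := G))), ‖a - b‖ < ε := by
  obtain ⟨T, hT, hd⟩ := Metric.mem_closure_iff.1 (coe_mem_closure_span a) ε hε
  have key : Submodule.span ℂ (Set.range (lreg (G := G))) =
      (Submodule.span ℂ (Set.range (uu (G := G)))).map (redCstar G).subtype.toLinearMap := by
    rw [Submodule.map_span]
    congr 1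
    ext x
    constructor
    · rintro ⟨g, rfl⟩; exact ⟨uu g, ⟨g, rfl⟩, coe_uu g⟩
    · rintro ⟨_, ⟨g, rfl⟩, rfl⟩; exact ⟨g, (coe_uu g).symm⟩
  rw [SetLike.mem_coe, key] at hT
  obtain ⟨b, hb, rfl⟩ := hT
  refine ⟨b, hb, ?_⟩
  rw [dist_eq_norm] at hd
  exact hd

theorem deltaOne_apply (h : G) [Decidable (h = 1)] :
    (deltaOne (G := G)) h = if h = 1 then 1 else 0 := by
  unfold deltaOne
  classical
  by_cases hh : h = 1
  · subst hh; simp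
  · simp [hh, lp.single_apply, Pi.single_apply]

theorem inner_deltaOne (ξ : ℓ²(G, ℂ)) : inner ℂ (deltaOne (G := G)) ξ = ξ 1 := by
  classical
  unfold deltaOne
  rw [lp.inner_single_left]
  simp

theorem tau_apply (a : redCstar G) : tau G a = (a : Bop G) deltaOne 1 := by
  rw [← inner_deltaOne]
  unfold tau
  rfl

theorem tau_uu (g : G) [Decidable (g = 1)] : tau G (uu g) = if g = 1 then 1 else 0 := by
  classical
  rw [tau_apply, coe_uu, lreg_apply, deltaOne_apply]
  simp

theorem tau_one : tau G 1 = 1 := by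
  classical
  rw [← uu_one, tau_uu]; simp

/-- right translation by `s` commutes with elements of the reduced C*-algebra -/
def rregE (s : G) : ℓ²(G, ℂ) ≃ₗᵢ[ℂ] ℓ²(G, ℂ) :=
{ toFun := fun f => ⟨fun h => f (h * s), by
    have hf : Summable fun i : G => ‖f i‖ ^ (2 : ℝ≥0∞).toReal :=
      (memℓp_gen_iff (by norm_num)).1 (lp.memℓp f)
    exact memℓp_gen ((Equiv.mulRight s).summable_iff.2 hf)⟩
  invFun := fun f => ⟨fun h => f (h * s⁻¹), by
    have hf : Summable fun i : G => ‖f i‖ ^ (2 : ℝ≥0∞).toReal :=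
      (memℓp_gen_iff (by norm_num)).1 (lp.memℓp f)
    exact memℓp_gen ((Equiv.mulRight s⁻¹).summable_iff.2 hf)⟩
  map_add' := by intro f₁ f₂; ext h; simp; rfl
  map_smul' := by intro c f; ext h; simp [lp.coeFn_smul]
  left_inv := by intro f; ext h; simp
  right_inv := by intro f; ext h; simp
  norm_map' := by
    intro f
    rw [lp.norm_eq_tsum_rpow (by norm_num) f, lp.norm_eq_tsum_rpow (by norm_num)]
    congr 1
    exact (Equiv.mulRight s).tsum_eq (fun h => ‖f h‖ ^ (2 : ℝ≥0∞).toReal) }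

def rreg (s : G) : Bop G := (rregE s).toContinuousLinearEquiv.toContinuousLinearMap

theorem rreg_apply (s : G) (ξ : ℓ²(G, ℂ)) (h : G) : rreg s ξ h = ξ (h * s) := rfl

theorem commute_rreg (s : G) (a : redCstar G) : (a : Bop G) * rreg s = rreg s * (a : Bop G) := by
  have hcl : IsClosed {T : Bop G | T * rreg s = rreg s * T} :=
    isClosed_eq (continuous_id.mul continuous_const) (continuous_const.mul continuous_id)
  refine closure_minimal ?_ hcl (coe_mem_closure_span a)
  intro T hT
  induction hT using Submodule.span_induction with
  | mem x hx =>
    obtain ⟨g, rfl⟩ := hx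
    show _ = _
    ext ξ k
    simp [lreg_apply, rreg_apply, mul_assoc]
  | zero => simp
  | add x y _ _ h1 h2 =>
    simp only [Set.mem_ofPred_eq] at *
    rw [add_mul, mul_add, h1, h2]
  | smul c x _ h =>
    simp only [Set.mem_ofPred_eq] at *
    rw [smul_mul_assoc, mul_smul_comm, h]

theorem tau_faithful (a : redCstar G) (h : tau G (star a * a) = 0) : a = 0 := by
  classical
  have h1 : (a : Bop G) deltaOne = 0 := by
    rw [tau_apply, ← inner_deltaOne] at h
    have : (((star a * a : redCstar G) : Bop G)) deltaOne = star (a : Bop G) ((a : Bop G) deltaOne) := rfl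
    rw [this, ContinuousLinearMap.star_eq_adjoint, ContinuousLinearMap.adjoint_inner_right] at h
    exact inner_self_eq_zero.1 h
  apply Subtype.ext
  apply ContinuousLinearMap.ext
  have h2 : ∀ s : G, (a : Bop G) (rreg s deltaOne) = 0 := by
    intro s
    have := congrArg (fun T : Bop G => T deltaOne) (commute_rreg s a)
    simp only [mul_apply_eq_comp] at this
    rw [this, h1, map_zero]
  intro ξ
  have h3 := lp.hasSum_single (p := 2) (by norm_num) ξ
  have h4 := h3.mapL (a : Bop G)
  have h5 : ∀ b : G, (a : Bop G) (lp.single 2 b (ξ b)) = 0 := by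
    intro b
    have : lp.single 2 b (ξ b) = ξ b • rreg b⁻¹ deltaOne := by
      ext k
      rw [lp.coeFn_smul, Pi.smul_apply, rreg_apply, deltaOne_apply, lp.single_apply, Pi.single_apply]
      by_cases hk : k = b
      · subst hk; simp
      · have : ¬ k * b⁻¹ = 1 := by rwa [mul_inv_eq_one]
        simp [hk, this]
    rw [this, map_smul, h2, smul_zero]
  simp only [h5] at h4
  exact h4.unique hasSum_zero

theorem easy_direction
    (H : ∀ φ : WeakDual ℂ (redCstar G),
        φ 1 • tau G ∈
          closure (convexHull ℝ {ψ : WeakDual ℂ (redCstar G) | ∃ g : G, ψ = dualAct g φ})) :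
    IsCstarSimple G := by
  intro I hI
  by_contra hcon
  push Not at hcon
  obtain ⟨hb, ht⟩ := hcon
  have h1 : (1 : redCstar G) ∉ I := by
    intro h
    exact ht (TwoSidedIdeal.one_mem_iff _ |>.1 h)
  -- the ideal as a closed submodule
  let S : Submodule ℂ (redCstar G) :=
    { carrier := I
      add_mem' := fun ha hb => I.add_mem ha hb
      zero_mem' := I.zero_mem
      smul_mem' := fun c x hx => by
        have := I.mul_mem_left (algebraMap ℂ (redCstar G) c) x hx
        rwa [← Algebra.smul_def] at this }
  obtain ⟨φ, hφ1, hφS⟩ : ∃ φ : WeakDual ℂ (redCstar G), φ 1 = 1 ∧ ∀ x ∈ I, φ x = 0 := by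
    have hcl : IsClosed (S : Set (redCstar G)) := hI
    obtain ⟨f, v, hf1, hf2⟩ := RCLike.geometric_hahn_banach_point_closed (𝕜 := ℂ)
      (x := (1 : redCstar G)) (S.restrictScalars ℝ).convex hcl h1
    have hv : v < 0 := by simpa using hf2 0 S.zero_mem
    have hz : ∀ x ∈ I, f x = 0 := by
      intro x hx
      by_contra hne
      have := hf2 (((v : ℂ) / f x) • x) (S.smul_mem _ hx)
      rw [map_smul, smul_eq_mul, div_mul_cancel₀ _ hne] at this
      simp at this
    have hne : f 1 ≠ 0 := by
      intro h0
      rw [h0] at hf1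
      simp at hf1
      linarith
    refine ⟨((f 1)⁻¹ • f : StrongDual ℂ (redCstar G)), ?_, ?_⟩
    · show (f 1)⁻¹ • f 1 = 1
      rw [smul_eq_mul, inv_mul_cancel₀ hne]
    · intro x hx
      show (f 1)⁻¹ • f x = 0
      rw [hz x hx, smul_zero]
  have hker : ∀ a ∈ I, tau G a = 0 := by
    intro a ha
    have hsub : closure (convexHull ℝ {ψ : WeakDual ℂ (redCstar G) | ∃ g : G, ψ = dualAct g φ}) ⊆
        {ψ | ψ a = 0} := by
      apply closure_minimal
      · apply convexHull_min
        · rintro _ ⟨g, rfl⟩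
          exact hφS _ (I.mul_mem_right _ _ (I.mul_mem_left _ _ ha))
        · intro x hx y hy s t _ _ _
          show (s • x + t • y) a = 0
          have hx' : x a = 0 := hx
          have hy' : y a = 0 := hy
          have : (s • x + t • y) a = s • x a + t • y a := rfl
          rw [this, hx', hy']; simp
      · exact isClosed_eq (WeakDual.eval_continuous a) continuous_const
    have := hsub (H φ)
    rw [hφ1, one_smul] at this
    exact this
  apply hb
  rw [eq_bot_iff]
  intro a ha
  have : a = 0 := tau_faithful a (hker _ (I.mul_mem_left _ _ ha))
  rw [this]; exact TwoSidedIdeal.zero_mem _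

/-! ### Means on a group -/

/-- bounded real functions on `G` -/
def bddF (G : Type u) : Subalgebra ℝ (G → ℝ) where
  carrier := {F | ∃ C, ∀ g, |F g| ≤ C}
  mul_mem' := by
    rintro a b ⟨C, hC⟩ ⟨D, hD⟩
    refine ⟨C * D, fun g => ?_⟩
    rw [Pi.mul_apply, abs_mul]
    exact mul_le_mul (hC g) (hD g) (abs_nonneg _) ((abs_nonneg _).trans (hC g))
  add_mem' := by
    rintro a b ⟨C, hC⟩ ⟨D, hD⟩
    exact ⟨C + D, fun g => (abs_add_le _ _).trans (add_le_add (hC g) (hD g))⟩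
  algebraMap_mem' := fun r => ⟨|r|, fun g => by simp⟩

theorem bddF_bound (F : bddF G) : ∃ C, 0 ≤ C ∧ ∀ g, |F.1 g| ≤ C := by
  obtain ⟨C, hC⟩ := F.2
  exact ⟨C, (abs_nonneg _).trans (hC 1), hC⟩

/-- left translation of functions -/
def ltr (g : G) : bddF G →ₗ[ℝ] bddF G where
  toFun F := ⟨fun h => F.1 (g * h), by obtain ⟨C, hC⟩ := F.2; exact ⟨C, fun h => hC _⟩⟩
  map_add' _ _ := rfl
  map_smul' _ _ := rfl

@[simp] theorem ltr_apply (g : G) (F : bddF G) (h : G) : (ltr g F).1 h = F.1 (g * h) := rfl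

theorem ltr_ltr (g k : G) (F : bddF G) : ltr k (ltr g F) = ltr (g * k) F := by
  apply Subtype.ext; funext h; simp [mul_assoc]

theorem ltr_one (F : bddF G) : ltr 1 F = F := by
  apply Subtype.ext; funext h; simp

theorem ltr_mul (g : G) (F F' : bddF G) : ltr g (F * F') = ltr g F * ltr g F' := rfl

structure IsMean (f : bddF G → ℝ) : Prop where
  add : ∀ F F', f (F + F') = f F + f F'
  smul : ∀ (c : ℝ) F, f (c • F) = c * f F
  nonneg : ∀ F : bddF G, (∀ g, 0 ≤ F.1 g) → 0 ≤ f F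
  one : f 1 = 1

/-- finitely additive means on `G` -/
def Mean (G : Type u) [Group G] := {f : bddF G → ℝ // IsMean f}

instance : TopologicalSpace (Mean G) := inferInstanceAs (TopologicalSpace {f : bddF G → ℝ // IsMean f})
instance : T2Space (Mean G) := inferInstanceAs (T2Space {f : bddF G → ℝ // IsMean f})

/-- a mean as a linear functional -/
def Mean.lin (m : Mean G) : bddF G →ₗ[ℝ] ℝ where
  toFun := m.1
  map_add' := m.2.add
  map_smul' := m.2.smul

theorem Mean.ext' {m k : Mean G} (h : ∀ F, m.lin F = k.lin F) : m = k :=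
  Subtype.ext (funext h)

theorem Mean.lin_one (m : Mean G) : m.lin 1 = 1 := m.2.one

theorem Mean.mono (m : Mean G) {F F' : bddF G} (h : ∀ g, F.1 g ≤ F'.1 g) : m.lin F ≤ m.lin F' := by
  have := m.2.nonneg (F' - F) (fun g => sub_nonneg.2 (h g))
  have h2 : m.lin (F' - F) = m.lin F' - m.lin F := map_sub _ _ _
  have h3 : 0 ≤ m.lin (F' - F) := this
  linarith

theorem Mean.le_of (m : Mean G) {F : bddF G} {C : ℝ} (h : ∀ g, F.1 g ≤ C) : m.lin F ≤ C := by
  have := m.mono (F := F) (F' := C • (1 : bddF G)) (fun g => by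
    show _ ≤ C * 1
    simpa using h g)
  rwa [map_smul, m.lin_one, smul_eq_mul, mul_one] at this

theorem Mean.ge_of (m : Mean G) {F : bddF G} {C : ℝ} (h : ∀ g, C ≤ F.1 g) : C ≤ m.lin F := by
  have := m.mono (F := C • (1 : bddF G)) (F' := F) (fun g => by
    show C * 1 ≤ _
    simpa using h g)
  rwa [map_smul, m.lin_one, smul_eq_mul, mul_one] at this

theorem Mean.abs_le (m : Mean G) {F : bddF G} {C : ℝ} (h : ∀ g, |F.1 g| ≤ C) : |m.lin F| ≤ C :=
  _root_.abs_le.2 ⟨m.ge_of fun g => (_root_.abs_le.1 (h g)).1, m.le_of fun g => (_root_.abs_le.1 (h g)).2⟩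

def Mean.mk' (f : bddF G →ₗ[ℝ] ℝ) (h : ∀ F : bddF G, (∀ g, 0 ≤ F.1 g) → 0 ≤ f F) (h1 : f 1 = 1) :
    Mean G := ⟨f, ⟨map_add f, fun c F => by rw [map_smul, smul_eq_mul], h, h1⟩⟩

@[simp] theorem Mean.mk'_lin (f : bddF G →ₗ[ℝ] ℝ) (h) (h1) (F : bddF G) :
    (Mean.mk' f h h1).lin F = f F := rfl

theorem isCompact_isMean : IsCompact {f : bddF G → ℝ | IsMean f} := by
  choose C hC0 hC using fun F : bddF G => bddF_bound F
  have hK : IsCompact (Set.univ.pi fun F : bddF G => Set.Icc (-C F) (C F)) :=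
    isCompact_univ_pi fun F => isCompact_Icc
  refine hK.of_isClosed_subset ?_ ?_
  · have : {f : bddF G → ℝ | IsMean f} =
      (⋂ F : bddF G, ⋂ F' : bddF G, {f | f (F + F') = f F + f F'}) ∩
      ((⋂ c : ℝ, ⋂ F : bddF G, {f | f (c • F) = c * f F}) ∩
      ((⋂ F : bddF G, ⋂ _ : ∀ g, 0 ≤ F.1 g, {f | 0 ≤ f F}) ∩ {f | f 1 = 1})) := by
      ext f
      simp only [Set.mem_inter_iff, Set.mem_iInter]
      exact ⟨fun h => ⟨h.add, h.smul, h.nonneg, h.one⟩, fun h => ⟨h.1, h.2.1, h.2.2.1, h.2.2.2⟩⟩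
    rw [this]
    refine IsClosed.inter ?_ (IsClosed.inter ?_ (IsClosed.inter ?_ ?_))
    · exact isClosed_iInter fun F => isClosed_iInter fun F' =>
        isClosed_eq (continuous_apply _) ((continuous_apply F).add (continuous_apply F'))
    · exact isClosed_iInter fun c => isClosed_iInter fun F =>
        isClosed_eq (continuous_apply _) (continuous_const.mul (continuous_apply _))
    · exact isClosed_iInter fun F => isClosed_iInter fun _ =>
        isClosed_le continuous_const (continuous_apply _)
    · exact isClosed_eq (continuous_apply _) continuous_const
  · intro f hf F _
    exact abs_le.1 (Mean.abs_le ⟨f, hf⟩ (hC F))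

instance : CompactSpace (Mean G) := isCompact_iff_compactSpace.1 isCompact_isMean

/-- point mass at the identity -/
def dirac1 : Mean G := Mean.mk'
  { toFun := fun F => F.1 1, map_add' := fun _ _ => rfl, map_smul' := fun _ _ => rfl }
  (fun _ h => h 1) rfl

instance : Nonempty (Mean G) := ⟨dirac1⟩

/-- the Poisson-type transform `(P_k F)(g) = k(F(g ·))` -/
def Pm (k : Mean G) : bddF G →ₗ[ℝ] bddF G where
  toFun F := ⟨fun g => k.lin (ltr g F), by
    obtain ⟨C, hC⟩ := F.2
    exact ⟨C, fun g => k.abs_le fun h => hC _⟩⟩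
  map_add' F F' := by apply Subtype.ext; funext g; simp
  map_smul' c F := by apply Subtype.ext; funext g; simp

@[simp] theorem Pm_apply (k : Mean G) (F : bddF G) (g : G) : (Pm k F).1 g = k.lin (ltr g F) := rfl

theorem ltr_Pm (k : Mean G) (F : bddF G) (g : G) : ltr g (Pm k F) = Pm k (ltr g F) := by
  apply Subtype.ext; funext h; simp [ltr_ltr]

/-- convolution of means -/
def conv (μ k : Mean G) : Mean G := Mean.mk' (μ.lin.comp (Pm k))
  (fun F h => μ.ge_of fun g => k.ge_of fun h' => h _)
  (by
    have : Pm k 1 = 1 := by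
      apply Subtype.ext; funext g
      exact k.lin_one
    rw [LinearMap.comp_apply, this, μ.lin_one])

@[simp] theorem conv_lin (μ k : Mean G) (F : bddF G) : (conv μ k).lin F = μ.lin (Pm k F) := rfl

theorem conv_assoc (ν μ k : Mean G) : conv ν (conv μ k) = conv (conv ν μ) k := by
  apply Mean.ext'
  intro F
  simp only [conv_lin]
  congr 1
  apply Subtype.ext; funext g
  simp [ltr_Pm]

theorem continuous_conv (k : Mean G) : Continuous (fun μ : Mean G => conv μ k) := by
  apply Continuous.subtype_mk
  apply continuous_pi
  intro F
  exact (continuous_apply (Pm k F)).comp continuous_subtype_val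

/-- convex combination of means -/
def mix (s : ℝ) (h0 : 0 ≤ s) (h1 : s ≤ 1) (μ ν : Mean G) : Mean G :=
  Mean.mk' (s • μ.lin + (1 - s) • ν.lin)
  (fun F h => by
    have a1 := μ.ge_of h
    have a2 := ν.ge_of h
    have : 0 ≤ s * μ.lin F + (1 - s) * ν.lin F :=
      add_nonneg (mul_nonneg h0 a1) (mul_nonneg (by linarith) a2)
    simpa using this)
  (by simp [Mean.lin_one])

@[simp] theorem mix_lin (s : ℝ) (h0 : 0 ≤ s) (h1 : s ≤ 1) (μ ν : Mean G) (F : bddF G) :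
    (mix s h0 h1 μ ν).lin F = s * μ.lin F + (1 - s) * ν.lin F := rfl

theorem mix_conv (s : ℝ) (h0 : 0 ≤ s) (h1 : s ≤ 1) (μ ν k : Mean G) :
    conv (mix s h0 h1 μ ν) k = mix s h0 h1 (conv μ k) (conv ν k) := by
  apply Mean.ext'; intro F; simp

theorem conv_mix (s : ℝ) (h0 : 0 ≤ s) (h1 : s ≤ 1) (μ ν k : Mean G) :
    conv k (mix s h0 h1 μ ν) = mix s h0 h1 (conv k μ) (conv k ν) := by
  apply Mean.ext'; intro F
  have : Pm (mix s h0 h1 μ ν) F = s • Pm μ F + (1 - s) • Pm ν F := by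
    apply Subtype.ext; funext g; simp
  simp only [conv_lin, this, mix_lin, map_add, map_smul, smul_eq_mul]

theorem exists_minimal_ideal : ∃ K : Set (Mean G), K.Nonempty ∧ IsClosed K ∧
    (∀ μ, ∀ k ∈ K, conv μ k ∈ K) ∧ (∀ k ∈ K, ∀ x ∈ K, ∃ μ, conv μ k = x) := by
  let 𝒮 : Set (Set (Mean G)) := {K | K.Nonempty ∧ IsClosed K ∧ (∀ μ, ∀ k ∈ K, conv μ k ∈ K)}
  have huniv : (Set.univ : Set (Mean G)) ∈ 𝒮 :=
    ⟨Set.univ_nonempty, isClosed_univ, fun _ _ _ => Set.mem_univ _⟩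
  obtain ⟨K, -, hK⟩ := zorn_superset_nonempty 𝒮 (by
    intro c hc hchain hne
    refine ⟨⋂₀ c, ⟨?_, ?_, ?_⟩, fun s hs => Set.sInter_subset_of_mem hs⟩
    · have : Nonempty c := hne.to_subtype
      rw [Set.sInter_eq_iInter]
      apply IsCompact.nonempty_iInter_of_directed_nonempty_isCompact_isClosed
      · intro a b
        rcases hchain.total a.2 b.2 with h | h
        · exact ⟨a, le_refl a.1, h⟩
        · exact ⟨b, h, le_refl b.1⟩
      · exact fun i => (hc i.2).1
      · exact fun i => (hc i.2).2.1.isCompact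
      · exact fun i => (hc i.2).2.1
    · exact isClosed_sInter fun s hs => (hc hs).2.1
    · intro μ k hk s hs
      exact (hc hs).2.2 μ k (hk s hs)) Set.univ huniv
  refine ⟨K, hK.prop.1, hK.prop.2.1, hK.prop.2.2, ?_⟩
  intro k hk x hx
  have hsub : Set.range (fun μ => conv μ k) ⊆ K := by
    rintro _ ⟨μ, rfl⟩; exact hK.prop.2.2 μ k hk
  have hmem : Set.range (fun μ => conv μ k) ∈ 𝒮 := by
    refine ⟨Set.range_nonempty _, (isCompact_range (continuous_conv k)).isClosed, ?_⟩
    rintro μ _ ⟨ν, rfl⟩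
    exact ⟨conv μ ν, (conv_assoc μ ν k).symm⟩
  exact hK.le_of_le hmem hsub hx

theorem exists_good_mean : ∃ m : Mean G, (∀ ν, ∃ μ, conv (conv μ ν) m = m) ∧ conv m m = m ∧
    (∀ ν, conv ν m = m → ∀ h F, ν.lin (h * Pm m F) = m.lin F * ν.lin h) := by
  obtain ⟨K, hne, hcl, hid, htr⟩ := exists_minimal_ideal (G := G)
  have hmix : ∀ s h0 h1, ∀ x ∈ K, ∀ y ∈ K, mix s h0 h1 x y ∈ K := by
    intro s h0 h1 x hx y hy
    obtain ⟨μ, hμ⟩ := htr x hx x hx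
    obtain ⟨ν, hν⟩ := htr x hx y hy
    have : mix s h0 h1 x y = conv (mix s h0 h1 μ ν) x := by rw [mix_conv, hμ, hν]
    rw [this]
    exact hid _ _ hx
  let K' : Set (bddF G → ℝ) := (fun k : Mean G => k.1) '' K
  have hK'c : IsCompact K' := hcl.isCompact.image continuous_subtype_val
  obtain ⟨_, ⟨⟨m, hmK, rfl⟩, hext⟩⟩ := hK'c.extremePoints_nonempty (hne.image _)
  -- extremality in terms of means
  have hex : ∀ s, ∀ (h0 : 0 < s) (h1 : s < 1), ∀ x ∈ K, ∀ y ∈ K, mix s h0.le h1.le x y = m → x = m := by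
    intro s h0 h1 x hx y hy hxy
    have := hext (Set.mem_image_of_mem _ hx) (Set.mem_image_of_mem _ hy)
      ⟨s, 1 - s, h0, by linarith, by linarith, congrArg Subtype.val hxy⟩
    exact Subtype.ext this
  have hmm : conv m m = m := by
    have h12 : (0 : ℝ) ≤ 1 / 2 := by norm_num
    have h12' : (1 / 2 : ℝ) ≤ 1 := by norm_num
    obtain ⟨μ, hμ⟩ := htr _ (hmix (1/2) h12 h12' _ hmK _ (hid m m hmK)) m hmK
    rw [conv_mix] at hμ
    have e1 := hex (1/2) (by norm_num) (by norm_num) _ (hid _ _ hmK) _ (hid _ _ (hid _ _ hmK)) hμ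
    rw [conv_assoc, e1] at hμ
    apply Mean.ext'
    intro F
    have := congrArg (fun k : Mean G => k.lin F) hμ
    simp only [mix_lin] at this
    linarith
  refine ⟨m, ?_, hmm, ?_⟩
  · intro ν
    obtain ⟨μ, hμ⟩ := htr _ (hid ν m hmK) m hmK
    exact ⟨μ, by rw [← conv_assoc, hμ]⟩
  · intro ν hν
    have key : ∀ h : bddF G, (∀ g, 1 / 4 ≤ h.1 g ∧ h.1 g ≤ 3 / 4) → ∀ F,
        ν.lin (h * Pm m F) = m.lin F * ν.lin h := by
      intro h hh F
      have hs1 : 1 / 4 ≤ ν.lin h := ν.ge_of fun g => (hh g).1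
      have hs2 : ν.lin h ≤ 3 / 4 := ν.le_of fun g => (hh g).2
      set s := ν.lin h with hs
      have hsub : ν.lin (1 - h) = 1 - s := by rw [map_sub, ν.lin_one]
      let ν1 : Mean G := Mean.mk' (s⁻¹ • ν.lin.comp (LinearMap.mulLeft ℝ h))
        (fun F hF => by
          have : 0 ≤ ν.lin (h * F) := ν.ge_of fun g =>
            mul_nonneg (by linarith [(hh g).1]) (hF g)
          exact mul_nonneg (inv_nonneg.2 (by linarith)) this)
        (by
          show s⁻¹ * ν.lin (h * 1) = 1
          rw [mul_one, ← hs, inv_mul_cancel₀ (by linarith)])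
      let ν2 : Mean G := Mean.mk' ((1 - s)⁻¹ • ν.lin.comp (LinearMap.mulLeft ℝ (1 - h)))
        (fun F hF => by
          have : 0 ≤ ν.lin ((1 - h) * F) := ν.ge_of fun g =>
            mul_nonneg (sub_nonneg.2 (by show h.1 g ≤ 1; linarith [(hh g).2])) (hF g)
          exact mul_nonneg (inv_nonneg.2 (by linarith)) this)
        (by
          show (1 - s)⁻¹ * ν.lin ((1 - h) * 1) = 1
          rw [mul_one, hsub, inv_mul_cancel₀ (by linarith)])
      have e1 : ∀ F, ν1.lin F = s⁻¹ * ν.lin (h * F) := fun F => rfl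
      have e2 : ∀ F, ν2.lin F = (1 - s)⁻¹ * ν.lin ((1 - h) * F) := fun F => rfl
      have hm : mix s (by linarith) (by linarith) ν1 ν2 = ν := by
        apply Mean.ext'; intro F
        have e3 : ν.lin ((1 - h) * F) = ν.lin F - ν.lin (h * F) := by
          rw [sub_mul, one_mul, map_sub]
        rw [mix_lin, e1, e2, e3, ← mul_assoc, ← mul_assoc,
          mul_inv_cancel₀ (by linarith), mul_inv_cancel₀ (by linarith)]
        ring
      have := hex s (by linarith) (by linarith) _ (hid ν1 m hmK) _ (hid ν2 m hmK)
        (by rw [← mix_conv, hm, hν])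
      have h3 := congrArg (fun k : Mean G => k.lin F) this
      simp only [conv_lin, e1] at h3
      rw [← h3]
      field_simp
    intro h F
    obtain ⟨C, hC0, hC⟩ := bddF_bound h
    have hF : ν.lin (Pm m F) = m.lin F := by rw [← conv_lin, hν]
    let c : ℝ := (4 * (C + 1))⁻¹
    have hc : 0 < c := by positivity
    have := key ((1 / 2 : ℝ) • 1 + c • h) (fun g => by
      have h1 : (((1 / 2 : ℝ) • 1 + c • h : bddF G)).1 g = 1 / 2 + c * h.1 g := by
        show (1/2 : ℝ) * 1 + c * h.1 g = _
        ring
      rw [h1]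
      have h2 : |c * h.1 g| ≤ 1 / 4 := by
        rw [abs_mul, abs_of_pos hc]
        calc c * |h.1 g| ≤ c * (C + 1) := by gcongr; linarith [hC g]
          _ = 1 / 4 := by simp only [c]; field_simp
      have := abs_le.1 h2
      constructor <;> linarith) F
    rw [add_mul, smul_mul_assoc, smul_mul_assoc, one_mul, map_add, map_add, map_smul, map_smul,
      map_smul, map_smul, hF, ν.lin_one] at this
    simp only [smul_eq_mul] at this
    have h5 : c * (ν.lin (h * Pm m F) - m.lin F * ν.lin h) = 0 := by linarith
    rcases mul_eq_zero.1 h5 with h6 | h6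
    · exact absurd h6 hc.ne'
    · linarith

/-! ### Multiplication operators and (real parts of) states on `B(ℓ²(G))` -/

/-- multiplication operator by a bounded real function -/
def Mop (F : bddF G) : Bop G :=
  LinearMap.mkContinuous
    { toFun := fun ξ => ⟨fun g => (F.1 g : ℂ) * ξ g, by
        obtain ⟨C, hC0, hC⟩ := bddF_bound F
        refine Memℓp.mono' (g := fun g => (C : ℂ) * ξ g) ?_ ?_
        · exact ((lp.memℓp ξ).const_smul (C : ℂ))
        · intro g
          rw [norm_mul, norm_mul, Complex.norm_real, Complex.norm_real, Real.norm_eq_abs,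
            Real.norm_of_nonneg hC0]
          exact mul_le_mul_of_nonneg_right (hC g) (norm_nonneg _)⟩
      map_add' := by intro ξ η; ext g; simp [mul_add]; rfl
      map_smul' := by intro c ξ; ext g; simp; ring }
    (Classical.choose (bddF_bound F)) (by
      intro ξ
      obtain ⟨hC0, hC⟩ := Classical.choose_spec (bddF_bound F)
      set C := Classical.choose (bddF_bound F)
      have : C * ‖ξ‖ = ‖(C : ℂ) • ξ‖ := by
        rw [norm_smul, Complex.norm_real, Real.norm_of_nonneg hC0]
      rw [this]
      apply lp.norm_mono (by norm_num)
      intro g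
      show ‖(F.1 g : ℂ) * ξ g‖ ≤ ‖(C : ℂ) * ξ g‖
      rw [norm_mul, norm_mul, Complex.norm_real, Complex.norm_real, Real.norm_eq_abs,
            Real.norm_of_nonneg hC0]
      exact mul_le_mul_of_nonneg_right (hC g) (norm_nonneg _))

theorem Mop_apply (F : bddF G) (ξ : ℓ²(G, ℂ)) (g : G) : Mop F ξ g = (F.1 g : ℂ) * ξ g := rfl

theorem Mop_add (F F' : bddF G) : Mop (F + F') = Mop F + Mop F' := by
  ext ξ g; simp [Mop_apply, add_mul]

theorem Mop_smul (c : ℝ) (F : bddF G) : Mop (c • F) = c • Mop F := by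
  ext ξ g
  have : (c • Mop F) ξ g = c • (Mop F ξ g) := rfl
  rw [this]; simp [Mop_apply, mul_assoc]

theorem Mop_one : Mop (1 : bddF G) = 1 := by
  ext ξ g; simp [Mop_apply]

theorem Mop_mul (F F' : bddF G) : Mop (F * F') = Mop F * Mop F' := by
  ext ξ g; simp [Mop_apply, mul_assoc]

theorem Mop_star (F : bddF G) : star (Mop F) = Mop F := by
  rw [ContinuousLinearMap.star_eq_adjoint]
  symm
  rw [ContinuousLinearMap.eq_adjoint_iff]
  intro ξ η
  rw [inner_eq_tsum, inner_eq_tsum]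
  congr 1
  ext h
  simp [Mop_apply]; ring

theorem Mop_lreg (F : bddF G) (g : G) : Mop F * lreg g = lreg g * Mop (ltr g F) := by
  ext ξ k; simp [Mop_apply, lreg_apply]

theorem lreg_Mop (F : bddF G) (g : G) : lreg g⁻¹ * Mop F = Mop (ltr g F) * lreg g⁻¹ := by
  ext ξ k; simp [Mop_apply, lreg_apply]

/-- operators with nonnegative real part -/
def Accr (T : Bop G) : Prop := ∀ ξ : ℓ²(G, ℂ), 0 ≤ (inner ℂ ξ (T ξ)).re

theorem Accr.add {S T : Bop G} (hS : Accr S) (hT : Accr T) : Accr (S + T) := by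
  intro ξ
  rw [ContinuousLinearMap.add_apply, inner_add_right, Complex.add_re]
  exact add_nonneg (hS ξ) (hT ξ)

theorem Accr.smul {T : Bop G} (hT : Accr T) {c : ℝ} (hc : 0 ≤ c) : Accr (c • T) := by
  intro ξ
  have : inner ℂ ξ ((c • T) ξ) = (c : ℂ) * inner ℂ ξ (T ξ) := by
    rw [ContinuousLinearMap.smul_apply, inner_smul_right_eq_smul]; simp
  rw [this, Complex.re_ofReal_mul]
  exact mul_nonneg hc (hT ξ)

theorem acc_star_mul (T : Bop G) : Accr (star T * T) := by
  intro ξ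
  rw [ContinuousLinearMap.star_eq_adjoint, mul_apply_eq_comp,
    ContinuousLinearMap.adjoint_inner_right]
  exact inner_self_nonneg (𝕜 := ℂ)

theorem acc_conj {T : Bop G} (hT : Accr T) (S : Bop G) : Accr (star S * T * S) := by
  intro ξ
  rw [ContinuousLinearMap.star_eq_adjoint, mul_apply_eq_comp, mul_apply_eq_comp,
    ContinuousLinearMap.adjoint_inner_right]
  exact hT _

theorem acc_norm_sub (T : Bop G) : Accr (‖T‖ • (1 : Bop G) - T) := by
  intro ξ
  have : inner ℂ ξ ((‖T‖ • (1 : Bop G) - T) ξ) = (‖T‖ : ℂ) * inner ℂ ξ ξ - inner ℂ ξ (T ξ) := by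
    rw [ContinuousLinearMap.sub_apply, inner_sub_right, ContinuousLinearMap.smul_apply,
      inner_smul_right_eq_smul]
    simp
  rw [this, Complex.sub_re, Complex.re_ofReal_mul]
  have h1 : (inner ℂ ξ ξ : ℂ).re = ‖ξ‖ ^ 2 := by
    rw [inner_self_eq_norm_sq_to_K]; norm_cast
  have h2 : (inner ℂ ξ (T ξ) : ℂ).re ≤ ‖ξ‖ * (‖T‖ * ‖ξ‖) :=
    (Complex.re_le_norm _).trans ((norm_inner_le_norm _ _).trans (by gcongr; exact T.le_opNorm ξ))
  rw [h1]; nlinarith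

theorem acc_skew {T : Bop G} (h : star T = - T) : Accr T := by
  intro ξ
  have h1 : inner ℂ ξ (T ξ) = - (starRingEnd ℂ) (inner ℂ ξ (T ξ)) := by
    rw [inner_conj_symm]
    conv_rhs => rw [← ContinuousLinearMap.adjoint_inner_right, ← ContinuousLinearMap.star_eq_adjoint, h]
    simp
  have h2 := congrArg Complex.re h1
  rw [Complex.neg_re, Complex.conj_re] at h2
  rw [show (inner ℂ ξ (T ξ)).re = 0 by linarith]

theorem acc_Mop {F : bddF G} (hF : ∀ g, 0 ≤ F.1 g) : Accr (Mop F) := by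
  intro ξ
  rw [inner_eq_tsum, Complex.re_tsum]
  · apply tsum_nonneg
    intro g
    rw [Mop_apply]
    have : inner ℂ (ξ g) ((F.1 g : ℂ) * ξ g) = ((F.1 g * ‖ξ g‖ ^ 2 : ℝ) : ℂ) := by
      simp [mul_assoc, Complex.mul_conj, Complex.normSq_eq_norm_sq]
    rw [this, Complex.ofReal_re]
    exact mul_nonneg (hF g) (by positivity)
  · exact lp.summable_inner ξ (Mop F ξ)

structure IsSt (ρ : Bop G →ₗ[ℝ] ℝ) : Prop where
  pos : ∀ T, Accr T → 0 ≤ ρ T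
  one : ρ 1 = 1

theorem IsSt.map_star {ρ : Bop G →ₗ[ℝ] ℝ} (h : IsSt ρ) (T : Bop G) : ρ (star T) = ρ T := by
  have h1 := h.pos _ (acc_skew (T := T - star T) (by rw [star_sub, star_star, neg_sub]))
  have h2 := h.pos _ (acc_skew (T := star T - T) (by rw [star_sub, star_star, neg_sub]))
  rw [map_sub] at h1 h2
  linarith

theorem IsSt.abs_le {ρ : Bop G →ₗ[ℝ] ℝ} (h : IsSt ρ) (T : Bop G) : |ρ T| ≤ ‖T‖ := by
  have h1 := h.pos _ (acc_norm_sub T)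
  have h2 := h.pos _ (acc_norm_sub (-T))
  rw [map_sub, map_smul, h.one] at h1 h2
  rw [norm_neg, map_neg] at h2
  simp only [smul_eq_mul, mul_one] at h1 h2
  exact _root_.abs_le.2 ⟨by linarith, by linarith⟩

theorem coe_rsmul (s : ℝ) (S : Bop G) : s • S = (s : ℂ) • S := by
  rw [Complex.coe_smul]; rfl

theorem star_rsmul (s : ℝ) (S : Bop G) : star (s • S) = s • star S := by
  rw [coe_rsmul, coe_rsmul, star_smul]; simp

theorem IsSt.cs {ρ : Bop G →ₗ[ℝ] ℝ} (h : IsSt ρ) {S : Bop G} (hS : ρ (Star.star S * S) = 0)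
    (T : Bop G) : ρ (Star.star S * T) = 0 := by
  have key : ∀ s : ℝ, 0 ≤ 2 * s * ρ (Star.star S * T) + ρ (Star.star T * T) := by
    intro s
    have h1 := h.pos _ (acc_star_mul (s • S + T))
    have h2 : Star.star (s • S + T) * (s • S + T) = (s * s) • (Star.star S * S)
      + s • (Star.star S * T) + s • Star.star (Star.star S * T) + Star.star T * T := by
      rw [star_add, star_rsmul, star_mul, star_star]
      simp only [add_mul, mul_add, smul_mul_assoc, mul_smul_comm, smul_add, smul_smul]
      abel
    rw [h2, map_add, map_add, map_add, map_smul, map_smul, map_smul, h.map_star, hS] at h1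
    simp only [smul_eq_mul] at h1
    linarith
  by_contra hne
  have := key (-(ρ (Star.star T * T) + 1) / (2 * ρ (Star.star S * T)))
  have h3 : 2 * (-(ρ (Star.star T * T) + 1) / (2 * ρ (Star.star S * T))) * ρ (Star.star S * T)
    = -(ρ (Star.star T * T) + 1) := by field_simp
  rw [h3] at this
  linarith

/-- restriction of a state to the bounded functions -/
def restr (ρ : Bop G →ₗ[ℝ] ℝ) (h : IsSt ρ) : Mean G :=
  Mean.mk' { toFun := fun F => ρ (Mop F)
             map_add' := fun F F' => by rw [Mop_add, map_add]
             map_smul' := fun c F => by rw [Mop_smul, map_smul]; rfl }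
    (fun F hF => h.pos _ (acc_Mop hF)) (by
      show ρ (Mop 1) = 1
      rw [Mop_one, h.one])

@[simp] theorem restr_lin (ρ : Bop G →ₗ[ℝ] ℝ) (h : IsSt ρ) (F : bddF G) :
    (restr ρ h).lin F = ρ (Mop F) := rfl

theorem norm_conj_le (g : G) (T : Bop G) : ‖lreg g⁻¹ * T * lreg g‖ ≤ ‖T‖ := by
  calc ‖lreg g⁻¹ * T * lreg g‖ ≤ ‖lreg g⁻¹‖ * ‖T‖ * ‖lreg g‖ :=
        (norm_mul_le _ _).trans (by gcongr; exact norm_mul_le _ _)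
    _ ≤ 1 * ‖T‖ * 1 := by gcongr <;> exact norm_lreg_le _
    _ = ‖T‖ := by ring

/-- the function `g ↦ ρ(λ_g⁻¹ T λ_g)` -/
def orbF (ρ : Bop G →ₗ[ℝ] ℝ) (h : IsSt ρ) : Bop G →ₗ[ℝ] bddF G where
  toFun T := ⟨fun g => ρ (lreg g⁻¹ * T * lreg g), ⟨‖T‖, fun g => (h.abs_le _).trans (norm_conj_le g T)⟩⟩
  map_add' S T := by
    apply Subtype.ext; funext g
    show ρ _ = ρ _ + ρ _
    rw [mul_add, add_mul, map_add]
  map_smul' c T := by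
    apply Subtype.ext; funext g
    show ρ _ = c • ρ _
    rw [mul_smul_comm, smul_mul_assoc, map_smul]

/-- average of a state by a mean -/
def avg (μ : Mean G) (ρ : Bop G →ₗ[ℝ] ℝ) (h : IsSt ρ) : Bop G →ₗ[ℝ] ℝ := μ.lin.comp (orbF ρ h)

theorem avg_isSt (μ : Mean G) (ρ : Bop G →ₗ[ℝ] ℝ) (h : IsSt ρ) : IsSt (avg μ ρ h) where
  pos T hT := by
    apply μ.ge_of
    intro g
    apply h.pos
    have := acc_conj hT (lreg g)
    rwa [lreg_star] at this
  one := by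
    have : orbF ρ h 1 = 1 := by
      apply Subtype.ext; funext g
      show ρ _ = 1
      rw [mul_one, ← lreg_mul, inv_mul_cancel, lreg_one, h.one]
    show μ.lin (orbF ρ h 1) = 1
    rw [this, μ.lin_one]

theorem restr_avg (μ : Mean G) (ρ : Bop G →ₗ[ℝ] ℝ) (h : IsSt ρ) :
    restr (avg μ ρ h) (avg_isSt μ ρ h) = conv μ (restr ρ h) := by
  apply Mean.ext'
  intro F
  rw [restr_lin, conv_lin]
  show μ.lin (orbF ρ h (Mop F)) = _
  congr 1
  apply Subtype.ext; funext g
  show ρ _ = ρ _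
  rw [lreg_Mop, mul_assoc, ← lreg_mul, inv_mul_cancel, lreg_one, mul_one]

theorem sep_state (C : Set (Bop G)) (hC : Convex ℝ C) (hne : C.Nonempty) (ε : ℝ)
    (h : ∀ T ∈ C, ∀ δ < ε, ¬ Accr (δ • (1 : Bop G) - T)) :
    ∃ ρ : Bop G →ₗ[ℝ] ℝ, IsSt ρ ∧ ∀ T ∈ C, ε ≤ ρ T := by
  let O : Set (Bop G) := {T | ∃ δ < ε, Accr (δ • (1 : Bop G) - T)}
  have hOconv : Convex ℝ O := by
    rintro S ⟨δ, hδ, hS⟩ T ⟨δ', hδ', hT⟩ a b ha hb hab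
    refine ⟨a * δ + b * δ', ?_, ?_⟩
    · rcases eq_or_lt_of_le ha with rfl | ha'
      · have : b = 1 := by linarith
        subst this; linarith
      · have e : ε = a * ε + b * ε := by rw [← add_mul, hab, one_mul]
        rw [e]
        exact add_lt_add_of_lt_of_le (mul_lt_mul_of_pos_left hδ ha')
          (mul_le_mul_of_nonneg_left hδ'.le hb)
    · have : (a * δ + b * δ') • (1 : Bop G) - (a • S + b • T) =
        a • (δ • (1 : Bop G) - S) + b • (δ' • (1 : Bop G) - T) := by
        rw [smul_sub, smul_sub, smul_smul, smul_smul, add_smul]; abel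
      rw [this]
      exact (hS.smul ha).add (hT.smul hb)
  have hOopen : IsOpen O := by
    rw [Metric.isOpen_iff]
    rintro T ⟨δ, hδ, hT⟩
    refine ⟨(ε - δ) / 2, by linarith, ?_⟩
    intro S hS
    rw [Metric.mem_ball, dist_eq_norm] at hS
    refine ⟨δ + ‖S - T‖, by linarith, ?_⟩
    have : (δ + ‖S - T‖) • (1 : Bop G) - S =
      (δ • (1 : Bop G) - T) + (‖S - T‖ • (1 : Bop G) - (S - T)) := by
      rw [add_smul]; abel
    rw [this]
    exact hT.add (acc_norm_sub _)
  have hdisj : Disjoint O C := by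
    rw [Set.disjoint_left]
    rintro T ⟨δ, hδ, hT⟩ hTC
    exact h T hTC δ hδ hT
  obtain ⟨f, v, hf1, hf2⟩ := geometric_hahn_banach_open hOconv hOopen hC hdisj
  have hshift : ∀ T, Accr T → ∀ δ < ε, ∀ n : ℝ, 0 ≤ n → δ * f 1 - n * f T < v := by
    intro T hT δ hδ n hn
    have : δ • (1 : Bop G) - n • T ∈ O := by
      refine ⟨δ, hδ, ?_⟩
      rw [sub_sub_cancel]
      exact hT.smul hn
    have := hf1 _ this
    rwa [map_sub, map_smul, map_smul] at this
  have hpos : ∀ T, Accr T → 0 ≤ f T := by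
    intro T hT
    by_contra hneg
    push Not at hneg
    have h0 := hshift T hT (ε - 1) (by linarith) 0 le_rfl
    have := hshift T hT (ε - 1) (by linarith) ((v - (ε - 1) * f 1) / (- f T))
      (div_nonneg (by linarith) (by linarith))
    have e : (v - (ε - 1) * f 1) / (- f T) * f T = - (v - (ε - 1) * f 1) := by
      have := hneg.ne
      field_simp
    rw [e] at this
    linarith
  have hacc1 : Accr (1 : Bop G) := by
    have := acc_star_mul (1 : Bop G)
    rwa [star_one, one_mul] at this
  have hf1' : 0 < f 1 := by
    rcases eq_or_lt_of_le (hpos 1 hacc1) with h0 | h0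
    · exfalso
      obtain ⟨T, hT⟩ := hne
      have hv := hshift 1 hacc1 (ε - 1) (by linarith) 0 le_rfl
      have h3 := hf2 T hT
      have h4 := hpos _ (acc_norm_sub T)
      rw [map_sub, map_smul, ← h0] at h4
      rw [← h0] at hv
      simp at h4 hv
      linarith
    · exact h0
  have hεv : ε * f 1 ≤ v := by
    by_contra hlt
    push Not at hlt
    have := hshift 1 hacc1 (v / f 1) (by rwa [div_lt_iff₀ hf1']) 0 le_rfl
    rw [div_mul_cancel₀ _ hf1'.ne'] at this
    linarith
  refine ⟨(f 1)⁻¹ • f.toLinearMap, ⟨?_, ?_⟩, ?_⟩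
  · intro T hT
    exact mul_nonneg (inv_nonneg.2 hf1'.le) (hpos T hT)
  · exact inv_mul_cancel₀ hf1'.ne'
  · intro T hT
    show ε ≤ (f 1)⁻¹ * f T
    rw [inv_mul_eq_div, le_div_iff₀ hf1']
    exact hεv.trans (hf2 T hT)

/-! ### Good means -/

structure Good (m : Mean G) : Prop where
  min : ∀ ν, ∃ μ, conv (conv μ ν) m = m
  idem : conv m m = m
  mulv : ∀ ν, conv ν m = m → ∀ h F, ν.lin (h * Pm m F) = m.lin F * ν.lin h

/-- the stabilizer of a mean -/
def Stab (m : Mean G) (h : G) : Prop := ∀ F, m.lin (ltr h F) = m.lin F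

theorem Stab.inv {m : Mean G} {h : G} (hh : Stab m h) : Stab m h⁻¹ := by
  intro F
  rw [← hh (ltr h⁻¹ F), ltr_ltr, inv_mul_cancel, ltr_one]

def Cls (m : Mean G) (f : bddF G) : Prop :=
  ∀ g, ∀ ν, conv ν m = m → ∀ h, ν.lin (h * ltr g f) = f.1 g * ν.lin h

theorem cls_Pm {m : Mean G} (hm : Good m) (F : bddF G) : Cls m (Pm m F) := by
  intro g ν hν h
  rw [ltr_Pm, hm.mulv ν hν]; rfl

theorem cls_one (m : Mean G) : Cls m 1 := by
  intro g ν hν h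
  have : ltr g (1 : bddF G) = 1 := rfl
  rw [this, mul_one]
  exact (one_mul _).symm

theorem Cls.mul {m : Mean G} {f f' : bddF G} (hf : Cls m f) (hf' : Cls m f') : Cls m (f * f') := by
  intro g ν hν h
  rw [ltr_mul, ← mul_assoc, hf' g ν hν, hf g ν hν, ← mul_assoc, mul_comm (f'.1 g)]
  rfl

theorem Cls.sub {m : Mean G} {f f' : bddF G} (hf : Cls m f) (hf' : Cls m f') : Cls m (f - f') := by
  intro g ν hν h
  rw [map_sub, mul_sub, map_sub, hf g ν hν, hf' g ν hν, ← sub_mul]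
  rfl

theorem Cls.ltr {m : Mean G} {f : bddF G} (hf : Cls m f) (k : G) : Cls m (ltr k f) := by
  intro g ν hν h
  rw [ltr_ltr, hf _ ν hν]
  rfl

theorem Cls.state {m : Mean G} {f : bddF G} (hf : Cls m f) {ρ : Bop G →ₗ[ℝ] ℝ} (hρ : IsSt ρ)
    (hm : conv (restr ρ hρ) m = m) (g : G) (T : Bop G) :
    ρ (Mop (_root_.ltr g f) * T) = f.1 g * ρ T := by
  set d : bddF G := _root_.ltr g f - (f.1 g) • (1 : bddF G) with hd
  have h1 : ρ (star (Mop d) * Mop d) = 0 := by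
    rw [Mop_star, ← Mop_mul]
    have e : d * d = d * _root_.ltr g f - (f.1 g) • d := by
      conv_lhs => rw [hd, mul_sub, ← hd, mul_smul_comm, mul_one]
    rw [← restr_lin ρ hρ, e, map_sub, hf g _ hm, map_smul, smul_eq_mul, sub_self]
  have h2 := hρ.cs h1 T
  have e2 : Mop d = Mop (_root_.ltr g f) - (f.1 g) • (1 : Bop G) := by
    have : _root_.ltr g f = d + (f.1 g) • (1 : bddF G) := by rw [hd]; abel
    rw [this, Mop_add, Mop_smul, Mop_one]; abel
  rw [Mop_star, e2, sub_mul, smul_mul_assoc, one_mul, map_sub, map_smul, smul_eq_mul] at h2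
  linarith

theorem Cls.state_right {m : Mean G} {f : bddF G} (hf : Cls m f) {ρ : Bop G →ₗ[ℝ] ℝ} (hρ : IsSt ρ)
    (hm : conv (restr ρ hρ) m = m) (g : G) (T : Bop G) :
    ρ (T * Mop (_root_.ltr g f)) = f.1 g * ρ T := by
  rw [← hρ.map_star, star_mul, Mop_star, hf.state hρ hm, hρ.map_star]

theorem off_stab {m : Mean G} (hgood : Good m) {ρ : Bop G →ₗ[ℝ] ℝ} (hρ : IsSt ρ)
    (hm : conv (restr ρ hρ) m = m) {s : G} (hs : ¬ Stab m s) (c : ℂ) : ρ (c • lreg s) = 0 := by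
  unfold Stab at hs
  push Not at hs
  obtain ⟨F, hF⟩ := hs
  have hc := cls_Pm hgood F
  have h1 := hc.state hρ hm 1 (c • lreg s)
  have h2 := hc.state_right hρ hm s (c • lreg s)
  rw [ltr_one, mul_smul_comm, Mop_lreg, ← smul_mul_assoc, h2] at h1
  have e1 : (Pm m F).1 s = m.lin (ltr s F) := rfl
  have e2 : (Pm m F).1 1 = m.lin F := by show m.lin (ltr 1 F) = _; rw [ltr_one]
  rw [e1, e2] at h1
  by_contra hne
  exact hF (mul_right_cancel₀ hne h1)

theorem fact1 {m : Mean G} (hgood : Good m) {ρ : Bop G →ₗ[ℝ] ℝ} (hρ : IsSt ρ) :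
    ∃ μ : Mean G, conv (restr (avg μ ρ hρ) (avg_isSt μ ρ hρ)) m = m := by
  obtain ⟨μ, hμ⟩ := hgood.min (restr ρ hρ)
  exact ⟨μ, by rw [restr_avg]; exact hμ⟩

/-! ### A Reiter type argument -/

abbrev L1 (G : Type u) := lp (fun _ : G => ℝ) 1

theorem reiter_p (m : Mean G) (s : Finset G) (hs : ∀ h ∈ s, Stab m h) (F : bddF G) (η : ℝ)
    (hη : 0 < η) : ∃ p : G →₀ ℝ, (∀ g, 0 ≤ p g) ∧ p.sum (fun _ a => a) = 1 ∧
      |p.sum (fun g a => a * F.1 g) - m.lin F| < η ∧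
      ∀ h ∈ s, ∑' k, |p (h⁻¹ * k) - p k| < η := by
  classical
  let E := (s → L1 G) × ℝ
  let D : G → E := fun g => (fun h => lp.single 1 (h.1 * g) (1 : ℝ) - lp.single 1 g (1 : ℝ),
    F.1 g - m.lin F)
  let L : (G →₀ ℝ) →ₗ[ℝ] E := Finsupp.linearCombination ℝ D
  let Δ : Set (G →₀ ℝ) := {p | (∀ g, 0 ≤ p g) ∧ p.sum (fun _ a => a) = 1}
  have hsum : ∀ p : G →₀ ℝ, p.sum (fun _ a => a) = Finsupp.linearCombination ℝ (fun _ => (1 : ℝ)) p := by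
    intro p; simp [Finsupp.linearCombination_apply]
  have hΔ : Convex ℝ Δ := by
    rintro p ⟨hp, hp1⟩ q ⟨hq, hq1⟩ a b ha hb hab
    refine ⟨fun g => ?_, ?_⟩
    · show 0 ≤ a * p g + b * q g
      have := hp g; have := hq g; positivity
    · rw [hsum] at *
      rw [map_add, map_smul, map_smul, hp1, hq1]
      simpa using hab
  have hK : Convex ℝ (L '' Δ) := hΔ.linear_image L
  have hmem : (0 : E) ∈ closure (L '' Δ) := by
    by_contra hnot
    obtain ⟨f, u, hu, hb⟩ := geometric_hahn_banach_point_closed hK.closure isClosed_closure hnot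
    rw [map_zero] at hu
    have hD : ∀ g, u < f (D g) := by
      intro g
      apply hb
      apply subset_closure
      refine ⟨Finsupp.single g 1, ⟨?_, ?_⟩, ?_⟩
      · intro k
        rw [Finsupp.single_apply]; split_ifs <;> norm_num
      · simp
      · simp [L]
    -- pieces
    let q : s → bddF G := fun h => ⟨fun g => f (Pi.single h (lp.single 1 g (1 : ℝ)), 0), ⟨‖f‖, fun g => by
      have h1 := f.le_opNorm ((Pi.single h (lp.single 1 g (1 : ℝ)), 0) : E)
      have h2 : ‖((Pi.single h (lp.single 1 g (1 : ℝ)), 0) : E)‖ ≤ 1 := by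
        rw [Prod.norm_def]
        apply max_le
        · rw [Pi.norm_single, lp.norm_single (by norm_num)]; simp
        · simp
      rw [Real.norm_eq_abs] at h1
      calc _ ≤ _ := h1
        _ ≤ ‖f‖ * 1 := by gcongr
        _ = ‖f‖ := mul_one _⟩⟩
    let r : ℝ := f (0, 1)
    let Q : bddF G := ∑ h : s, (ltr h.1 (q h) - q h) + r • (F - m.lin F • (1 : bddF G))
    have hQ : ∀ g, Q.1 g = f (D g) := by
      intro g
      have e : D g = ∑ h : s, (((Pi.single h (lp.single 1 (h.1 * g) (1 : ℝ)), 0) : E)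
        - ((Pi.single h (lp.single 1 g (1 : ℝ)), 0) : E)) + (F.1 g - m.lin F) • ((0, 1) : E) := by
        apply Prod.ext
        · funext h
          simp only [D, Prod.fst_add, Prod.fst_sum, Prod.fst_sub, Prod.smul_fst, smul_zero, add_zero,
            Finset.sum_apply, Pi.sub_apply]
          rw [Finset.sum_eq_single h]
          · simp
          · intro b _ hb
            simp [Pi.single_eq_of_ne hb.symm]
          · simp
        · simp [D, Prod.snd_sum]
      rw [e, map_add, map_sum, map_smul]
      have e1 : Q.1 g = (∑ h : s, (ltr h.1 (q h) - q h)).1 g + r * (F.1 g - m.lin F * 1) := rfl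
      rw [e1]
      congr 1
      · have : ∀ t : Finset s, (∑ h ∈ t, (ltr h.1 (q h) - q h)).1 g = ∑ h ∈ t, ((q h).1 (h.1 * g) - (q h).1 g) := by
          intro t
          induction t using Finset.induction_on with
          | empty => rfl
          | insert a t ha ih => rw [Finset.sum_insert ha, Finset.sum_insert ha, ← ih]; rfl
        rw [this]
        apply Finset.sum_congr rfl
        intro h _
        rw [map_sub]
      · rw [smul_eq_mul, mul_one, mul_comm]
    have hz : m.lin Q = 0 := by
      simp only [Q]
      rw [map_add, map_sum, map_smul, map_sub, map_smul, m.lin_one]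
      rw [Finset.sum_eq_zero]
      · simp
      · intro h _
        rw [map_sub, hs h.1 h.2, sub_self]
    have := m.ge_of (F := Q) (C := u) (fun g => by rw [hQ]; exact (hD g).le)
    linarith
  obtain ⟨_, ⟨p, ⟨hp0, hp1⟩, rfl⟩, hd⟩ := Metric.mem_closure_iff.1 hmem η hη
  rw [dist_zero_left] at hd
  refine ⟨p, hp0, hp1, ?_, ?_⟩
  · have h1 : (L p).2 = p.sum (fun g a => a * F.1 g) - m.lin F := by
      have : ∀ p : G →₀ ℝ, (L p).2 = p.sum (fun g a => a * F.1 g) - m.lin F * p.sum (fun _ a => a) := by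
        intro p
        induction p using Finsupp.induction_linear with
        | zero => simp
        | add p q hp hq =>
          rw [map_add, Prod.snd_add, hp, hq, Finsupp.sum_add_index', Finsupp.sum_add_index'] <;> intros <;> ring
        | single g a =>
          have e : L (Finsupp.single g a) = a • D g := Finsupp.linearCombination_single _ _ _
          have e2 : (L (Finsupp.single g a)).2 = a * (F.1 g - m.lin F) := by rw [e]; rfl
          rw [e2, Finsupp.sum_single_index (by simp), Finsupp.sum_single_index rfl]; ring
      rw [this, hp1, mul_one]
    rw [← h1]
    exact lt_of_le_of_lt (norm_snd_le (L p)) hd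
  · intro h hh
    have h1 : ∀ k, ((L p).1 ⟨h, hh⟩ : L1 G) k = p (h⁻¹ * k) - p k := by
      intro k
      have : ∀ p : G →₀ ℝ, ((L p).1 ⟨h, hh⟩ : L1 G) k = p (h⁻¹ * k) - p k := by
        intro p
        induction p using Finsupp.induction_linear with
        | zero => simp
        | add p q hp hq =>
          have e : ((L (p + q)).1 ⟨h, hh⟩ : L1 G) k = ((L p).1 ⟨h, hh⟩ : L1 G) k + ((L q).1 ⟨h, hh⟩ : L1 G) k := by
            rw [map_add]; rfl
          rw [e, hp, hq, Finsupp.add_apply, Finsupp.add_apply]; ring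
        | single g a =>
          have e : L (Finsupp.single g a) = a • D g := Finsupp.linearCombination_single _ _ _
          have e2 : ((L (Finsupp.single g a)).1 ⟨h, hh⟩ : L1 G) k =
            a * ((lp.single 1 (h * g) (1 : ℝ) : L1 G) k - (lp.single 1 g (1 : ℝ) : L1 G) k) := by
            rw [e]; rfl
          rw [e2, lp.single_apply, lp.single_apply, Pi.single_apply, Pi.single_apply,
            Finsupp.single_apply, Finsupp.single_apply]
          have i1 : (k = h * g) = (g = h⁻¹ * k) := by
            rw [eq_inv_mul_iff_mul_eq]; exact propext eq_comm
          have i2 : (k = g) = (g = k) := propext eq_comm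
          simp only [i1, i2]
          split_ifs <;> simp
      exact this p
    have h2 : ‖(L p).1 ⟨h, hh⟩‖ < η :=
      lt_of_le_of_lt ((norm_le_pi_norm _ _).trans (norm_fst_le (L p))) hd
    rw [lp.norm_eq_tsum_rpow (by norm_num)] at h2
    simpa [h1] using h2

theorem reiter_vec (p : G →₀ ℝ) (hp : ∀ g, 0 ≤ p g) (hp1 : p.sum (fun _ a => a) = 1) :
    ∃ ξ : ℓ²(G, ℂ), (inner ℂ ξ ξ).re = 1 ∧
      (∀ F : bddF G, (inner ℂ ξ (Mop F ξ)).re = p.sum (fun g a => a * F.1 g)) ∧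
      ∀ h, |(inner ℂ ξ (lreg h ξ)).re - 1| ≤ ∑' k, |p (h⁻¹ * k) - p k| := by
  have hfin : ∀ f : G → ℝ, (∀ g, p g = 0 → f g = 0) → Summable f := by
    intro f hf
    apply summable_of_ne_finset_zero (s := p.support)
    intro g hg
    exact hf g (Finsupp.notMem_support_iff.1 hg)
  let ξ : ℓ²(G, ℂ) := ⟨fun g => ((Real.sqrt (p g) : ℝ) : ℂ), by
    apply memℓp_gen
    apply hfin
    intro g hg
    simp [hg]⟩
  have hξ : ∀ g, ξ g = ((Real.sqrt (p g) : ℝ) : ℂ) := fun _ => rfl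
  have hF : ∀ F : bddF G, (inner ℂ ξ (Mop F ξ)).re = p.sum (fun g a => a * F.1 g) := by
    intro F
    rw [inner_eq_tsum, Finsupp.sum]
    have : ∀ g, inner ℂ (ξ g) (Mop F ξ g) = ((p g * F.1 g : ℝ) : ℂ) := by
      intro g
      rw [Mop_apply, hξ]
      have := Real.mul_self_sqrt (hp g)
      conv_rhs => rw [← this]
      simp; ring
    simp_rw [this]
    rw [← Complex.ofReal_tsum, Complex.ofReal_re]
    apply tsum_eq_sum
    intro g hg
    rw [Finsupp.notMem_support_iff.1 hg, zero_mul]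
  refine ⟨ξ, ?_, hF, ?_⟩
  · have := hF 1
    rw [Mop_one] at this
    rw [show inner ℂ ξ ξ = inner ℂ ξ ((1 : Bop G) ξ) from rfl, this, ← hp1]
    congr 1; funext g a
    show a * 1 = a
    rw [mul_one]
  · intro h
    have e : ∀ g, inner ℂ (ξ g) (lreg h ξ g) = ((Real.sqrt (p g) * Real.sqrt (p (h⁻¹ * g)) : ℝ) : ℂ) := by
      intro g
      rw [lreg_apply, hξ, hξ]
      simp; ring
    rw [inner_eq_tsum]
    simp_rw [e]
    rw [← Complex.ofReal_tsum, Complex.ofReal_re]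
    have s1 : Summable (fun g => p g) := hfin _ (fun _ h => h)
    have s2 : Summable (fun g => p (h⁻¹ * g)) := (Equiv.mulLeft h⁻¹).summable_iff.2 s1
    have s3 : Summable (fun g => Real.sqrt (p g) * Real.sqrt (p (h⁻¹ * g))) :=
      hfin _ (fun g h => by simp [h])
    have s4 : Summable (fun g => |p (h⁻¹ * g) - p g|) := (s2.sub s1).abs
    have t1 : ∑' g, p g = 1 := by
      rw [← hp1, Finsupp.sum]
      apply tsum_eq_sum
      intro g hg
      exact Finsupp.notMem_support_iff.1 hg
    have t2 : ∑' g, p (h⁻¹ * g) = 1 := by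
      rw [← t1]; exact (Equiv.mulLeft h⁻¹).tsum_eq (fun g => p g)
    have key : ∀ g, |2 * (Real.sqrt (p g) * Real.sqrt (p (h⁻¹ * g))) - p g - p (h⁻¹ * g)| ≤
        |p (h⁻¹ * g) - p g| := by
      intro g
      have a1 := Real.mul_self_sqrt (hp g)
      have a2 := Real.mul_self_sqrt (hp (h⁻¹ * g))
      have b1 := Real.sqrt_nonneg (p g)
      have b2 := Real.sqrt_nonneg (p (h⁻¹ * g))
      set x := Real.sqrt (p g)
      set y := Real.sqrt (p (h⁻¹ * g))
      rw [← a1, ← a2]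
      have c1 : 2 * (x * y) - x * x - y * y = - ((y - x) * (y - x)) := by ring
      have c2 : y * y - x * x = (y - x) * (y + x) := by ring
      rw [c1, c2, abs_neg, abs_mul, abs_mul]
      apply mul_le_mul_of_nonneg_left _ (abs_nonneg _)
      rw [abs_of_nonneg (by linarith : 0 ≤ y + x), _root_.abs_le]
      constructor <;> linarith
    have t3 : ∑' g, (2 * (Real.sqrt (p g) * Real.sqrt (p (h⁻¹ * g))) - p g - p (h⁻¹ * g)) =
        2 * (∑' g, (Real.sqrt (p g) * Real.sqrt (p (h⁻¹ * g))) - 1) := by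
      rw [Summable.tsum_sub ((s3.mul_left 2).sub s1) s2, Summable.tsum_sub (s3.mul_left 2) s1, tsum_mul_left, t1, t2]
      ring
    have t4 : |∑' g, (2 * (Real.sqrt (p g) * Real.sqrt (p (h⁻¹ * g))) - p g - p (h⁻¹ * g))| ≤
        ∑' g, |p (h⁻¹ * g) - p g| := by
      have s5 := ((s3.mul_left 2).sub s1).sub s2
      refine le_trans ?_ (Summable.tsum_le_tsum key s5.abs s4)
      have := norm_tsum_le_tsum_norm (f := fun g => 2 * (Real.sqrt (p g) * Real.sqrt (p (h⁻¹ * g))) - p g - p (h⁻¹ * g)) s5.norm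
      simpa only [Real.norm_eq_abs] using this
    rw [t3, abs_mul] at t4
    have := abs_nonneg (∑' g, (Real.sqrt (p g) * Real.sqrt (p (h⁻¹ * g))) - 1)
    norm_num at t4
    linarith

theorem exists_omega (m : Mean G) : ∃ ω : Bop G →ₗ[ℝ] ℝ, IsSt ω ∧ (∀ F, ω (Mop F) = m.lin F) ∧
    ∀ h, Stab m h → ω (lreg h) = 1 := by
  let L1' : bddF G →ₗ[ℝ] Bop G :=
    { toFun := fun F => Mop F - m.lin F • (1 : Bop G)
      map_add' := fun F F' => by rw [Mop_add, map_add, add_smul]; abel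
      map_smul' := fun c F => by rw [Mop_smul, map_smul, smul_assoc, smul_sub]; rfl }
  let L2 : ({h // Stab m h} →₀ ℝ) →ₗ[ℝ] Bop G :=
    Finsupp.linearCombination ℝ (fun h => lreg h.1 - 1)
  let W : Submodule ℝ (Bop G) := LinearMap.range (L1'.coprod L2)
  have hW : ∀ T ∈ (W : Set (Bop G)), ∀ δ < (0 : ℝ), ¬ Accr (δ • (1 : Bop G) - T) := by
    classical
    rintro _ ⟨⟨F, l⟩, rfl⟩ δ hδ hacc
    let B : ℝ := 1 + ∑ h ∈ l.support, |l h|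
    have hB : 0 < B := by
      have : 0 ≤ ∑ h ∈ l.support, |l h| := Finset.sum_nonneg fun _ _ => abs_nonneg _
      show 0 < 1 + _
      linarith
    obtain ⟨p, hp0, hp1, hpF, hph⟩ := reiter_p m (l.support.image Subtype.val) (by
      intro h hh
      obtain ⟨x, _, rfl⟩ := Finset.mem_image.1 hh
      exact x.2) F (-δ / (2 * B)) (by apply div_pos <;> linarith)
    obtain ⟨ξ, h1, hF, hh⟩ := reiter_vec p hp0 hp1
    have := hacc ξ
    -- the real linear functional
    let f : Bop G →ₗ[ℝ] ℝ :=
      { toFun := fun T => (inner ℂ ξ (T ξ)).re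
        map_add' := fun S T => by
          rw [ContinuousLinearMap.add_apply, inner_add_right, Complex.add_re]
        map_smul' := fun c T => by
          rw [coe_rsmul, ContinuousLinearMap.smul_apply, inner_smul_right, Complex.re_ofReal_mul]; rfl }
    have f1 : f 1 = 1 := h1
    have fF : f (Mop F) = p.sum (fun g a => a * F.1 g) := hF F
    have fh : ∀ h ∈ l.support, |f (lreg h.1) - 1| ≤ -δ / (2 * B) := by
      intro h hm
      exact (hh h.1).trans (hph h.1 (Finset.mem_image_of_mem _ hm)).le
    have h2 : 0 ≤ f (δ • (1 : Bop G) - (L1'.coprod L2) (F, l)) := this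
    have h3 : f ((L1'.coprod L2) (F, l)) = (p.sum (fun g a => a * F.1 g) - m.lin F) +
        ∑ h ∈ l.support, l h * (f (lreg h.1) - 1) := by
      rw [LinearMap.coprod_apply, map_add]
      congr 1
      · show f (Mop F - m.lin F • (1 : Bop G)) = _
        rw [map_sub, map_smul, fF, f1, smul_eq_mul, mul_one]
      · show f (Finsupp.linearCombination ℝ (fun h : {h // Stab m h} => lreg h.1 - 1) l) = _
        rw [Finsupp.linearCombination_apply, Finsupp.sum, map_sum]
        apply Finset.sum_congr rfl
        intro h _
        rw [map_smul, map_sub, f1, smul_eq_mul]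
    rw [map_sub, map_smul, f1, h3] at h2
    have h4 : -(∑ h ∈ l.support, l h * (f (lreg h.1) - 1)) ≤ (∑ h ∈ l.support, |l h|) * (-δ / (2 * B)) := by
      rw [← Finset.sum_neg_distrib, Finset.sum_mul]
      apply Finset.sum_le_sum
      intro h hm
      calc -(l h * (f (lreg h.1) - 1)) ≤ |l h * (f (lreg h.1) - 1)| := neg_le_abs _
        _ = |l h| * |f (lreg h.1) - 1| := abs_mul _ _
        _ ≤ _ := by gcongr; exact fh h hm
    have h5 := (_root_.abs_lt.1 hpF).1
    have h6 : B * (-δ / (2 * B)) = -δ / 2 := by field_simp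
    have h7 : B * (-δ / (2 * B)) = (-δ / (2 * B)) + (∑ h ∈ l.support, |l h|) * (-δ / (2 * B)) := by
      show (1 + _) * _ = _
      ring
    rw [smul_eq_mul] at h2
    linarith
  obtain ⟨ω, hω, hge⟩ := sep_state (W : Set (Bop G)) W.convex ⟨0, W.zero_mem⟩ 0 hW
  have hz : ∀ T ∈ W, ω T = 0 := by
    intro T hT
    have a := hge T hT
    have b := hge (-T) (W.neg_mem hT)
    rw [map_neg] at b
    linarith
  refine ⟨ω, hω, ?_, ?_⟩
  · intro F
    have := hz _ ⟨(F, 0), rfl⟩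
    rw [LinearMap.coprod_apply, map_zero, add_zero] at this
    have h2 : ω (Mop F - m.lin F • (1 : Bop G)) = 0 := this
    rw [map_sub, map_smul, hω.one, smul_eq_mul, mul_one] at h2
    linarith
  · intro h hh
    have := hz _ ⟨(0, Finsupp.single ⟨h, hh⟩ 1), rfl⟩
    rw [LinearMap.coprod_apply, map_zero, zero_add] at this
    have h2 : ω (lreg h - 1) = 0 := by
      have e : L2 (Finsupp.single ⟨h, hh⟩ 1) = lreg h - 1 := by
        show Finsupp.linearCombination ℝ (fun h : {h // Stab m h} => lreg h.1 - 1) _ = _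
        rw [Finsupp.linearCombination_single, one_smul]
      rw [← e]; exact this
    rw [map_sub, hω.one] at h2
    linarith

/-! ### Using simplicity -/

theorem neg_decomp {A : Type*} [CStarAlgebra A] (x : A) (hx : IsSelfAdjoint x) :
    ∃ p q y : A, p = star q * q ∧ x = star y * y - p ∧ p * x = -(p * p) ∧ IsSelfAdjoint p := by
  letI := CStarAlgebra.spectralOrder A
  haveI := CStarAlgebra.spectralOrderedRing A
  obtain ⟨q, hq⟩ := CStarAlgebra.nonneg_iff_eq_star_mul_self.1 (CFC.negPart_nonneg x)
  obtain ⟨y, hy⟩ := CStarAlgebra.nonneg_iff_eq_star_mul_self.1 (CFC.posPart_nonneg x)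
  have h1 := CFC.posPart_sub_negPart x hx
  refine ⟨x⁻, q, y, hq, ?_, ?_, (CFC.negPart_nonneg x).isSelfAdjoint⟩
  · rw [← hy, h1]
  · have h2 : x⁻ * x = x⁻ * (x⁺ - x⁻) := by rw [h1]
    rw [h2, mul_sub, CFC.negPart_mul_posPart, zero_sub]

theorem IsSt.cont {ρ : Bop G →ₗ[ℝ] ℝ} (h : IsSt ρ) : Continuous ρ :=
  AddMonoidHomClass.continuous_of_bound ρ 1 (fun T => by
    rw [one_mul]; exact h.abs_le T)

theorem vanish_ext {ρ : Bop G →ₗ[ℝ] ℝ} (h : IsSt ρ) (f : Bop G → Bop G) (hf : Continuous f)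
    (hadd : ∀ S T, f (S + T) = f S + f T) (hsmul : ∀ (d : ℂ) T, ∃ d' : ℂ, f (d • T) = d' • f T)
    (hgen : ∀ g (c : ℂ), ρ (c • f (lreg g)) = 0) (a : redCstar G) (c : ℂ) :
    ρ (c • f (a : Bop G)) = 0 := by
  have hspan : ∀ T ∈ Submodule.span ℂ (Set.range (lreg (G := G))), ∀ c : ℂ, ρ (c • f T) = 0 := by
    intro T hT
    induction hT using Submodule.span_induction with
    | mem x hx => obtain ⟨g, rfl⟩ := hx; exact hgen g
    | zero =>
      intro c
      have : f 0 = 0 := by have := hadd 0 0; simpa using this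
      rw [this, smul_zero, map_zero]
    | add x y _ _ hx hy => intro c; rw [hadd, smul_add, map_add, hx, hy, add_zero]
    | smul d x _ hx =>
      intro c
      obtain ⟨d', hd⟩ := hsmul d x
      rw [hd, smul_smul]; exact hx _
  have hcl : IsClosed {T : Bop G | ρ (c • f T) = 0} :=
    isClosed_eq (h.cont.comp (hf.const_smul c)) continuous_const
  exact closure_minimal (fun T hT => hspan T hT c) hcl (coe_mem_closure_span a)

theorem omega_left {ω : Bop G →ₗ[ℝ] ℝ} (h : IsSt ω) {k : G} (hk : ω (lreg k) = 1) (T : Bop G) :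
    ω (lreg k * T) = ω T := by
  have hk' : ω (lreg k⁻¹) = 1 := by rw [← lreg_star, h.map_star, hk]
  have h1 : ω (star (lreg k⁻¹ - 1) * (lreg k⁻¹ - 1)) = 0 := by
    rw [star_sub, lreg_star, inv_inv, star_one, sub_mul, mul_sub, mul_sub, ← lreg_mul, mul_inv_cancel,
      lreg_one, mul_one, mul_one, one_mul, map_sub, map_sub, map_sub, h.one, hk, hk']
    ring
  have h2 := h.cs h1 T
  rw [star_sub, lreg_star, inv_inv, star_one, sub_mul, one_mul, map_sub] at h2
  linarith

/-- pairs used to build the vanishing set -/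
def JGen (m : Mean G) : Set (Bop G) :=
  {T | ∃ f t, Cls m f ∧ (∀ g, f.1 g ≠ 0 → Stab m (g⁻¹ * t * g)) ∧ T = Mop f * (1 - lreg t)}

theorem conj_gen (f : bddF G) (t g : G) :
    lreg g⁻¹ * (Mop f * (1 - lreg t)) * lreg g = Mop (ltr g f) * (1 - lreg (g⁻¹ * t * g)) := by
  rw [← mul_assoc, lreg_Mop, mul_assoc, mul_assoc]
  congr 1
  rw [sub_mul, one_mul, mul_sub, ← lreg_mul, ← lreg_mul, ← lreg_mul, inv_mul_cancel, lreg_one, mul_assoc]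

theorem JGen_conj {m : Mean G} {T : Bop G} (hT : T ∈ JGen m) (g : G) :
    lreg g⁻¹ * T * lreg g ∈ JGen m := by
  obtain ⟨f, t, hf, hft, rfl⟩ := hT
  refine ⟨ltr g f, g⁻¹ * t * g, hf.ltr g, ?_, conj_gen f t g⟩
  intro k hk
  have := hft (g * k) hk
  convert this using 1
  group

theorem omega_JGen {m : Mean G} {ω : Bop G →ₗ[ℝ] ℝ} (h : IsSt ω)
    (hm : conv (restr ω h) m = m) (hst : ∀ k, Stab m k → ω (lreg k) = 1) {T : Bop G}
    (hT : T ∈ JGen m) (b₁ b₂ : redCstar G) : ω (star (b₁ : Bop G) * T * (b₂ : Bop G)) = 0 := by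
  have hgen : ∀ a b (c : ℂ), ω (c • (star (lreg a) * T * lreg b)) = 0 := by
    intro a b c
    obtain ⟨f, t, hf, hft, rfl⟩ := hT
    have e : c • (star (lreg a) * (Mop f * (1 - lreg t)) * lreg b) =
      Mop (ltr a f) * (c • lreg (a⁻¹ * b) - lreg (a⁻¹ * t * a) * (c • lreg (a⁻¹ * b))) := by
      have : lreg b = lreg a * lreg (a⁻¹ * b) := by rw [← lreg_mul]; group
      rw [lreg_star, this, ← mul_assoc, conj_gen, mul_assoc, ← mul_smul_comm, sub_mul, one_mul, smul_sub,
        mul_smul_comm]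
    rw [e, hf.state h hm]
    by_cases h0 : f.1 a = 0
    · rw [h0, zero_mul]
    · rw [map_sub, omega_left h (hst _ (hft a h0)), sub_self, mul_zero]
  have h2 : ∀ a (b : redCstar G) (c : ℂ), ω (c • (star (lreg a) * T * (b : Bop G))) = 0 := by
    intro a b c
    refine vanish_ext h (fun S => star (lreg a) * T * S) (by fun_prop) (fun S S' => mul_add _ _ _)
      (fun d S => ⟨d, mul_smul_comm _ _ _⟩) (fun g c => hgen a g c) b c
  have h3 : ∀ (c : ℂ), ω (c • (star (b₁ : Bop G) * T * (b₂ : Bop G))) = 0 := by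
    intro c
    refine vanish_ext h (fun S => star S * T * (b₂ : Bop G)) (by fun_prop)
      (fun S S' => by simp only [star_add, add_mul])
      (fun d S => ⟨star d, by simp only [star_smul, smul_mul_assoc]⟩) (fun g c => h2 g b₂ c) b₁ c
  have := h3 1
  rwa [one_smul] at this

theorem acc_of_omega (hG : IsCstarSimple G) {ω : Bop G →ₗ[ℝ] ℝ} (h : IsSt ω) (a : redCstar G)
    (ha : ∀ b : redCstar G, 0 ≤ ω (star (b : Bop G) * (a : Bop G) * (b : Bop G))) :
    Accr (a : Bop G) := by
  haveI : IsClosed ((redCstar G : StarSubalgebra ℂ (Bop G)) : Set (Bop G)) := redCstar_isClosed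
  -- the ideal
  let J : TwoSidedIdeal (redCstar G) := TwoSidedIdeal.mk'
    {x | ∀ b₁ b₂ : redCstar G, ω (star (b₁ : Bop G) * (x : Bop G) * (b₂ : Bop G)) = 0}
    (by intro b₁ b₂; simp)
    (by
      intro x y hx hy b₁ b₂
      have := hx b₁ b₂
      have := hy b₁ b₂
      simp_all [mul_add, add_mul])
    (by
      intro x hx b₁ b₂
      have := hx b₁ b₂
      simp_all)
    (by
      intro x y hy b₁ b₂
      have := hy (star x * b₁) b₂
      simpa [mul_assoc] using this)
    (by
      intro x y hx b₁ b₂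
      have := hx b₁ (y * b₂)
      simpa [mul_assoc] using this)
  have hJ : ∀ x : redCstar G, x ∈ J ↔ ∀ b₁ b₂ : redCstar G, ω (star (b₁ : Bop G) * (x : Bop G) * (b₂ : Bop G)) = 0 := by
    intro x
    exact TwoSidedIdeal.mem_mk' _ _ _ _ _ _ x
  have hJc : IsClosed (J : Set (redCstar G)) := by
    have : (J : Set (redCstar G)) = ⋂ b₁ : redCstar G, ⋂ b₂ : redCstar G,
      {x : redCstar G | ω (star (b₁ : Bop G) * (x : Bop G) * (b₂ : Bop G)) = 0} := by
      ext x
      simp only [Set.mem_iInter, SetLike.mem_coe, hJ]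
      rfl
    rw [this]
    refine isClosed_iInter fun b₁ => isClosed_iInter fun b₂ => isClosed_eq (h.cont.comp ?_) continuous_const
    have := continuous_subtype_val (p := fun x => x ∈ redCstar G)
    fun_prop
  have hJbot : ∀ x : redCstar G, x ∈ J → x = 0 := by
    rcases hG J hJc with hb | ht
    · intro x hx
      rw [hb] at hx
      exact (TwoSidedIdeal.mem_bot _).1 hx
    · exfalso
      have h1 : (1 : redCstar G) ∈ J := by rw [ht]; trivial
      have := (hJ 1).1 h1 1 1
      simp [h.one] at this
  obtain ⟨p, q, y, hpq, hxy, hpx, hpsa⟩ := neg_decomp (a + star a) (by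
    rw [IsSelfAdjoint, star_add, star_star, add_comm])
  -- r = q * p
  have hr : ∀ b : redCstar G, ω (star ((q * p * b : redCstar G) : Bop G) * ((q * p * b : redCstar G) : Bop G)) = 0 := by
    intro b
    have e1 : star (q * p * b) * (q * p * b) = star b * p * p * p * b := by
      have : star (q * p * b) * (q * p * b) = star b * star p * (star q * q) * p * b := by
        simp only [star_mul, mul_assoc]
      rw [this, ← hpq, hpsa.star_eq]
    have e2 : star b * p * p * p * b = - (star (p * b) * (a + star a) * (p * b)) := by
      have : star (p * b) * (a + star a) * (p * b) = star b * (p * (a + star a)) * p * b := by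
        simp only [star_mul, hpsa.star_eq, mul_assoc]
      rw [this, hpx]; simp only [mul_neg, neg_mul, neg_neg, mul_assoc]
    have e3 : (star ((q * p * b : redCstar G) : Bop G) * ((q * p * b : redCstar G) : Bop G)) =
      - (star ((p * b : redCstar G) : Bop G) * (a : Bop G) * ((p * b : redCstar G) : Bop G))
      - star (star ((p * b : redCstar G) : Bop G) * (a : Bop G) * ((p * b : redCstar G) : Bop G)) := by
      have := congrArg (Subtype.val : redCstar G → Bop G) (e1.trans e2)
      have h0 : ((star (q * p * b) * (q * p * b) : redCstar G) : Bop G) =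
        star ((q * p * b : redCstar G) : Bop G) * ((q * p * b : redCstar G) : Bop G) := rfl
      rw [← h0, this]
      have h1 : ((-(star (p * b) * (a + star a) * (p * b)) : redCstar G) : Bop G) =
        - (star ((p * b : redCstar G) : Bop G) * ((a : Bop G) + star (a : Bop G)) * ((p * b : redCstar G) : Bop G)) := rfl
      rw [h1, star_mul, star_mul, star_star, mul_add, add_mul, neg_add, sub_eq_add_neg]
      simp only [mul_assoc]
    apply le_antisymm
    · rw [e3, map_sub, map_neg, h.map_star]
      have := ha (p * b)
      linarith
    · exact h.pos _ (acc_star_mul _)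
  have hp3 : star (q * p) * (q * p) ∈ J := by
    rw [hJ]
    intro b₁ b₂
    have := h.cs (hr b₁) ((q * p * b₂ : redCstar G) : Bop G)
    have e : star ((q * p * b₁ : redCstar G) : Bop G) * ((q * p * b₂ : redCstar G) : Bop G) =
      star (b₁ : Bop G) * ((star (q * p) * (q * p) : redCstar G) : Bop G) * (b₂ : Bop G) := by
      have : (star (q * p * b₁) * (q * p * b₂) : redCstar G) = star b₁ * (star (q * p) * (q * p)) * b₂ := by
        rw [star_mul]; simp only [mul_assoc]
      exact congrArg (Subtype.val : redCstar G → Bop G) this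
    rw [← e]; exact this
  have hqp : q * p = 0 := CStarRing.star_mul_self_eq_zero_iff _ |>.1 (hJbot _ hp3)
  have hpp : star p * p = 0 := by
    have : star p * p = star q * (q * p) := by rw [hpsa.star_eq, ← mul_assoc, ← hpq]
    rw [this, hqp, mul_zero]
  have hp0 : p = 0 := CStarRing.star_mul_self_eq_zero_iff _ |>.1 hpp
  rw [hp0, sub_zero] at hxy
  have hxy' : (a : Bop G) + star (a : Bop G) = star (y : Bop G) * (y : Bop G) :=
    congrArg (Subtype.val : redCstar G → Bop G) hxy
  intro ξ
  have h1 := acc_star_mul (y : Bop G) ξ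
  rw [← hxy', ContinuousLinearMap.add_apply, inner_add_right, Complex.add_re,
    ContinuousLinearMap.star_eq_adjoint, ContinuousLinearMap.adjoint_inner_right] at h1
  have h2 : (inner ℂ ((a : Bop G) ξ) ξ).re = (inner ℂ ξ ((a : Bop G) ξ)).re := by
    rw [← inner_conj_symm, Complex.conj_re]
  linarith

theorem find_pair {m : Mean G} (hgood : Good m) (T : Finset G) : ∀ f, Cls m f → (∃ g, f.1 g ≠ 0) →
    (∀ g, f.1 g ≠ 0 → ∃ t ∈ T, Stab m (g⁻¹ * t * g)) →
    ∃ f', Cls m f' ∧ ∃ t ∈ T, (∃ g, f'.1 g ≠ 0) ∧ ∀ g, f'.1 g ≠ 0 → Stab m (g⁻¹ * t * g) := by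
  classical
  induction T using Finset.induction_on with
  | empty =>
    rintro f hf ⟨g, hg⟩ h
    obtain ⟨t, ht, _⟩ := h g hg
    simp at ht
  | insert t₀ T _ ih =>
    rintro f hf hne h
    by_cases hall : ∀ g, f.1 g ≠ 0 → Stab m (g⁻¹ * t₀ * g)
    · exact ⟨f, hf, t₀, Finset.mem_insert_self _ _, hne, hall⟩
    · push Not at hall
      obtain ⟨g₁, hg₁, hs⟩ := hall
      unfold Stab at hs
      push Not at hs
      obtain ⟨F, hF⟩ := hs
      let F' := ltr g₁⁻¹ F
      let v : bddF G := ltr t₀ (Pm m F') - Pm m F'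
      have hv : ∀ g, v.1 g = m.lin (ltr (t₀ * g) F') - m.lin (ltr g F') := fun g => rfl
      have hvc : Cls m v := ((cls_Pm hgood F').ltr t₀).sub (cls_Pm hgood F')
      have hfv : ∀ g, (f * v).1 g = f.1 g * v.1 g := fun g => rfl
      obtain ⟨f', hf', t, ht, h1, h2⟩ := ih (f * v) (hf.mul hvc) ⟨g₁, by
        rw [hfv]
        apply mul_ne_zero hg₁
        rw [hv, ltr_ltr, ltr_ltr, inv_mul_cancel, ltr_one, ← mul_assoc]
        exact sub_ne_zero.2 hF⟩ (by
        intro g hg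
        rw [hfv] at hg
        obtain ⟨t, ht, hst⟩ := h g (left_ne_zero_of_mul hg)
        rcases Finset.mem_insert.1 ht with rfl | ht'
        · exfalso
          apply right_ne_zero_of_mul hg
          have e := hst (ltr g F')
          have : g * (g⁻¹ * t * g) = t * g := by group
          rw [ltr_ltr (g := g), this] at e
          rw [hv, e, sub_self]
        · exact ⟨t, ht', hst⟩)
      exact ⟨f', hf', t, Finset.mem_insert_of_mem ht, h1, h2⟩

theorem exists_psi (hG : IsCstarSimple G) {m : Mean G} (hgood : Good m) :
    ∃ ψ : Bop G →ₗ[ℝ] ℝ, IsSt ψ ∧ (∀ s : G, s ≠ 1 → ψ (lreg s) = 0) ∧ ∀ T ∈ JGen m, ψ T = 0 := by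
  obtain ⟨ω, hω, hωF, hωs⟩ := exists_omega m
  have hconv : conv (restr ω hω) m = m := by
    have : restr ω hω = m := by
      apply Mean.ext'
      intro F
      rw [restr_lin, hωF]
    rw [this, hgood.idem]
  let Wτ : Submodule ℝ (Bop G) := Submodule.span ℝ {T | ∃ a : redCstar G, T = a ∧ (tau G a).re = 0}
  let W : Submodule ℝ (Bop G) := Wτ ⊔ Submodule.span ℝ (JGen m)
  have hWτ : ∀ T ∈ Wτ, ∃ a : redCstar G, T = a ∧ (tau G a).re = 0 := by
    intro T hT
    induction hT using Submodule.span_induction with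
    | mem x hx => exact hx
    | zero => exact ⟨0, rfl, by simp⟩
    | add x y _ _ hx hy =>
      obtain ⟨a, rfl, ha⟩ := hx
      obtain ⟨b, rfl, hb⟩ := hy
      exact ⟨a + b, rfl, by rw [map_add, Complex.add_re, ha, hb, add_zero]⟩
    | smul c x _ hx =>
      obtain ⟨a, rfl, ha⟩ := hx
      refine ⟨(c : ℂ) • a, coe_rsmul c (a : Bop G), ?_⟩
      rw [map_smul, smul_eq_mul, Complex.re_ofReal_mul, ha, mul_zero]
  have hJ : ∀ T ∈ Submodule.span ℝ (JGen m), ∀ b : redCstar G, ω (star (b : Bop G) * T * (b : Bop G)) = 0 := by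
    intro T hT b
    induction hT using Submodule.span_induction with
    | mem x hx => exact omega_JGen hω hconv hωs hx b b
    | zero => simp
    | add x y _ _ hx hy => rw [mul_add, add_mul, map_add, hx, hy, add_zero]
    | smul c x _ hx => rw [mul_smul_comm, smul_mul_assoc, map_smul, hx, smul_zero]
  have hW : ∀ T ∈ (W : Set (Bop G)), ∀ δ < (0 : ℝ), ¬ Accr (δ • (1 : Bop G) - T) := by
    intro T hT δ hδ hacc
    obtain ⟨x, hx, j, hj, rfl⟩ := Submodule.mem_sup.1 hT
    obtain ⟨a, rfl, ha⟩ := hWτ x hx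
    have key := acc_of_omega hG hω ((δ : ℂ) • 1 - a) (by
      intro b
      have h1 := hω.pos _ (acc_conj hacc (b : Bop G))
      have h2 := hJ j hj b
      have e : star (b : Bop G) * (((δ : ℂ) • 1 - a : redCstar G) : Bop G) * (b : Bop G) =
        star (b : Bop G) * (δ • (1 : Bop G) - ((a : Bop G) + j)) * (b : Bop G) + star (b : Bop G) * j * (b : Bop G) := by
        have : (((δ : ℂ) • 1 - a : redCstar G) : Bop G) = (δ • (1 : Bop G) - ((a : Bop G) + j)) + j := by
          rw [coe_rsmul]
          show (δ : ℂ) • (1 : Bop G) - (a : Bop G) = _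
          abel
        rw [this, mul_add, add_mul]
      rw [e, map_add, h2, add_zero]
      exact h1)
    have h3 := key deltaOne
    rw [inner_deltaOne, ← tau_apply, map_sub, map_smul, tau_one, Complex.sub_re, ha] at h3
    simp at h3
    linarith
  obtain ⟨ψ, hψ, hge⟩ := sep_state (W : Set (Bop G)) W.convex ⟨0, W.zero_mem⟩ 0 hW
  have hz : ∀ T ∈ W, ψ T = 0 := by
    intro T hT
    have a := hge T hT
    have b := hge (-T) (W.neg_mem hT)
    rw [map_neg] at b
    linarith
  refine ⟨ψ, hψ, ?_, ?_⟩
  · intro s hs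
    apply hz
    apply Submodule.mem_sup_left
    apply Submodule.subset_span
    exact ⟨uu s, (coe_uu s).symm, by classical rw [tau_uu]; simp [hs]⟩
  · intro T hT
    exact hz _ (Submodule.mem_sup_right (Submodule.subset_span hT))

theorem propA (hG : IsCstarSimple G) {m : Mean G} (hgood : Good m) (T : Finset G) (hT : (1 : G) ∉ T) :
    ∃ g : G, ∀ t ∈ T, ¬ Stab m (g⁻¹ * t * g) := by
  by_contra hcon
  push Not at hcon
  obtain ⟨f, hf, t, ht, ⟨g₀, hg₀⟩, hft⟩ := find_pair hgood T 1 (cls_one m) ⟨1, one_ne_zero⟩ (fun g _ => hcon g)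
  obtain ⟨ψ, hψ, hψs, hψJ⟩ := exists_psi hG hgood
  obtain ⟨μ, hμ⟩ := fact1 hgood hψ
  have ht1 : ∀ g : G, ∀ s : G, s ≠ 1 → g⁻¹ * s * g ≠ 1 := by
    intro g s hs h
    apply hs
    have : s = g * (g⁻¹ * s * g) * g⁻¹ := by group
    rw [this, h]; group
  set ρ := avg μ ψ hψ with hρdef
  have hρ : IsSt ρ := avg_isSt μ ψ hψ
  have hρs : ∀ s : G, s ≠ 1 → ρ (lreg s) = 0 := by
    intro s hs
    have : orbF ψ hψ (lreg s) = 0 := by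
      apply Subtype.ext; funext g
      show ψ (lreg g⁻¹ * lreg s * lreg g) = 0
      rw [← lreg_mul, ← lreg_mul]
      exact hψs _ (ht1 g s hs)
    show μ.lin (orbF ψ hψ (lreg s)) = 0
    rw [this, map_zero]
  have hρJ : ∀ T ∈ JGen m, ρ T = 0 := by
    intro T hT
    have : orbF ψ hψ T = 0 := by
      apply Subtype.ext; funext g
      exact hψJ _ (JGen_conj hT g)
    show μ.lin (orbF ψ hψ T) = 0
    rw [this, map_zero]
  have h1 : ρ (lreg g₀⁻¹ * (Mop f * (1 - lreg t)) * lreg g₀) = 0 :=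
    hρJ _ (JGen_conj ⟨f, t, hf, hft, rfl⟩ g₀)
  rw [conj_gen, hf.state hρ hμ, map_sub, hρ.one, hρs _ (ht1 g₀ t (by rintro rfl; exact hT ht)), sub_zero, mul_one] at h1
  exact hg₀ h1

/-! ### Averaging -/

theorem norm_bound_of_acc {T : Bop G} {ε : ℝ} (hε : 0 ≤ ε)
    (h : ∀ z ∈ ([1, -1, Complex.I, -Complex.I] : List ℂ), Accr (ε • (1 : Bop G) - z • T)) : ‖T‖ ≤ 8 * ε := by
  have h1 : ∀ z ∈ ([1, -1, Complex.I, -Complex.I] : List ℂ), ∀ ξ, (z * inner ℂ ξ (T ξ)).re ≤ ε * ‖ξ‖ ^ 2 := by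
    intro z hz ξ
    have := h z hz ξ
    rw [coe_rsmul, ContinuousLinearMap.sub_apply, inner_sub_right, ContinuousLinearMap.smul_apply,
      ContinuousLinearMap.smul_apply, inner_smul_right, inner_smul_right, Complex.sub_re,
      Complex.re_ofReal_mul] at this
    have h2 : (inner ℂ ξ ((1 : Bop G) ξ) : ℂ).re = ‖ξ‖ ^ 2 := by
      show (inner ℂ ξ ξ : ℂ).re = _
      rw [inner_self_eq_norm_sq_to_K]; norm_cast
    rw [h2] at this
    linarith
  have h2 : ∀ ξ, ‖inner ℂ (T ξ) ξ‖ ≤ 2 * (ε * ‖ξ‖ ^ 2) := by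
    intro ξ
    rw [← inner_conj_symm, RCLike.norm_conj]
    have a1 := h1 1 (by simp) ξ
    have a2 := h1 (-1) (by simp) ξ
    have a3 := h1 Complex.I (by simp) ξ
    have a4 := h1 (-Complex.I) (by simp) ξ
    simp only [one_mul, neg_mul, Complex.neg_re, Complex.I_mul_re, neg_neg] at a1 a2 a3 a4
    calc _ ≤ |(inner ℂ ξ (T ξ)).re| + |(inner ℂ ξ (T ξ)).im| := Complex.norm_le_abs_re_add_abs_im _
      _ ≤ ε * ‖ξ‖ ^ 2 + ε * ‖ξ‖ ^ 2 := by
        apply add_le_add <;> rw [_root_.abs_le] <;> constructor <;> linarith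
      _ = _ := by ring
  have h3 : ∀ x y, ‖inner ℂ (T y) x‖ ≤ 2 * ε * (‖x‖ + ‖y‖) ^ 2 := by
    intro x y
    have := inner_map_polarization T.toLinearMap x y
    have b : ∀ ξ, ‖ξ‖ ≤ ‖x‖ + ‖y‖ → ‖inner ℂ (T ξ) ξ‖ ≤ 2 * ε * (‖x‖ + ‖y‖) ^ 2 := by
      intro ξ hξ
      calc _ ≤ _ := h2 ξ
        _ ≤ 2 * (ε * (‖x‖ + ‖y‖) ^ 2) := by gcongr
        _ = _ := by ring
    have nI : ‖Complex.I • y‖ = ‖y‖ := by rw [norm_smul, Complex.norm_I, one_mul]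
    have b1 := b (x + y) (norm_add_le _ _)
    have b2 := b (x - y) (norm_sub_le _ _)
    have b3 := b (x + Complex.I • y) ((norm_add_le _ _).trans_eq (by rw [nI]))
    have b4 := b (x - Complex.I • y) ((norm_sub_le _ _).trans_eq (by rw [nI]))
    have e : inner ℂ (T y) x = (inner ℂ (T (x + y)) (x + y) - inner ℂ (T (x - y)) (x - y)
      + Complex.I * inner ℂ (T (x + Complex.I • y)) (x + Complex.I • y)
      - Complex.I * inner ℂ (T (x - Complex.I • y)) (x - Complex.I • y)) / 4 := this
    rw [e, norm_div]
    have n4 : ‖(4 : ℂ)‖ = 4 := by norm_num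
    rw [n4, div_le_iff₀ (by norm_num)]
    refine (norm_sub_le _ _).trans ?_
    refine (add_le_add (norm_add_le _ _) le_rfl).trans ?_
    refine (add_le_add (add_le_add (norm_sub_le _ _) le_rfl) le_rfl).trans ?_
    rw [norm_mul, norm_mul, Complex.norm_I, one_mul, one_mul]
    linarith
  apply ContinuousLinearMap.opNorm_le_bound _ (by positivity)
  intro y
  by_cases hT : T y = 0
  · rw [hT, norm_zero]; positivity
  have hT' : 0 < ‖T y‖ := norm_pos_iff.2 hT
  have hy : 0 < ‖y‖ := by
    rw [norm_pos_iff]; rintro rfl; exact hT (map_zero T)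
  have := h3 (((‖y‖ / ‖T y‖ : ℝ) : ℂ) • T y) y
  rw [inner_smul_right, norm_mul, norm_smul, inner_self_eq_norm_sq_to_K] at this
  have e1 : ‖((‖y‖ / ‖T y‖ : ℝ) : ℂ)‖ = ‖y‖ / ‖T y‖ := by
    rw [Complex.norm_real, Real.norm_of_nonneg (by positivity)]
  have e2 : ‖((‖T y‖ : ℂ)) ^ 2‖ = ‖T y‖ ^ 2 := by
    rw [norm_pow, Complex.norm_real, Real.norm_of_nonneg (by positivity)]
  have e3 : ‖((RCLike.ofReal ‖T y‖ : ℂ)) ^ 2‖ = ‖T y‖ ^ 2 := e2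
  rw [e1, e3] at this
  have e4 : ‖y‖ / ‖T y‖ * ‖T y‖ ^ 2 = ‖y‖ * ‖T y‖ := by field_simp
  have e5 : ‖y‖ / ‖T y‖ * ‖T y‖ = ‖y‖ := by field_simp
  rw [e4, e5] at this
  have : ‖y‖ * ‖T y‖ ≤ ‖y‖ * (8 * ε * ‖y‖) := by nlinarith
  exact le_of_mul_le_mul_left this hy

abbrev EndA (G : Type u) [Group G] := redCstar G →L[ℂ] redCstar G

def AdL (g : G) : EndA G :=
  { toFun := fun a => uu g⁻¹ * a * uu g
    map_add' := fun a b => by rw [mul_add, add_mul]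
    map_smul' := fun c a => by rw [mul_smul_comm, smul_mul_assoc]; rfl
    cont := (continuous_const.mul continuous_id).mul continuous_const }

theorem AdL_apply (g : G) (a : redCstar G) : AdL g a = uu g⁻¹ * a * uu g := rfl

theorem coe_AdL (g : G) (a : redCstar G) : (AdL g a : Bop G) = lreg g⁻¹ * (a : Bop G) * lreg g := by
  rw [AdL_apply, ← coe_uu, ← coe_uu]; rfl

theorem AdL_comp (g h : G) : (AdL g).comp (AdL h) = AdL (h * g) := by
  ext a : 1
  show uu g⁻¹ * (uu h⁻¹ * a * uu h) * uu g = uu (h * g)⁻¹ * a * uu (h * g)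
  rw [mul_inv_rev, uu_mul, uu_mul]
  simp only [mul_assoc]

variable (G) in
def Avg : Set (EndA G) := convexHull ℝ (Set.range AdL)

theorem AdL_mem (g : G) : AdL g ∈ Avg G := subset_convexHull _ _ ⟨g, rfl⟩

theorem Avg_convex : Convex ℝ (Avg G) := convex_convexHull _ _

theorem Avg_induct (P : EndA G → Prop) (h1 : ∀ g, P (AdL g))
    (h2 : ∀ Φ Ψ, ∀ a b : ℝ, 0 ≤ a → 0 ≤ b → a + b = 1 → P Φ → P Ψ → P (a • Φ + b • Ψ)) :
    ∀ Φ ∈ Avg G, P Φ := by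
  intro Φ hΦ
  have : Avg G ⊆ {Φ | P Φ} := by
    apply convexHull_min
    · rintro _ ⟨g, rfl⟩; exact h1 g
    · intro Φ hΦ Ψ hΨ a b ha hb hab
      exact h2 Φ Ψ a b ha hb hab hΦ hΨ
  exact this hΦ

theorem comb_comp (Φ Ψ Θ : EndA G) (a b : ℝ) :
    (a • Φ + b • Ψ).comp Θ = a • (Φ.comp Θ) + b • (Ψ.comp Θ) := by
  ext x : 1; rfl

theorem comp_comb (Φ Ψ Θ : EndA G) (a b : ℝ) :
    Θ.comp (a • Φ + b • Ψ) = a • (Θ.comp Φ) + b • (Θ.comp Ψ) := by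
  ext x : 1
  show Θ (a • Φ x + b • Ψ x) = a • Θ (Φ x) + b • Θ (Ψ x)
  rw [map_add, ← Complex.coe_smul, ← Complex.coe_smul, map_smul, map_smul]
  rfl

theorem Avg_comp {Φ Ψ : EndA G} (hΦ : Φ ∈ Avg G) (hΨ : Ψ ∈ Avg G) : Φ.comp Ψ ∈ Avg G := by
  revert Φ
  apply Avg_induct
  · intro g
    revert Ψ
    apply Avg_induct
    · intro h
      rw [AdL_comp]; exact AdL_mem _
    · intro Φ Ψ a b ha hb hab h1 h2
      rw [comp_comb]
      exact Avg_convex h1 h2 ha hb hab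
  · intro Φ Θ a b ha hb hab h1 h2
    rw [comb_comp]
    exact Avg_convex h1 h2 ha hb hab

theorem coe_comb (Φ Ψ : EndA G) (a b : ℝ) (x : redCstar G) :
    ((a • Φ + b • Ψ) x : Bop G) = a • (Φ x : Bop G) + b • (Ψ x : Bop G) := rfl

theorem Avg_norm {Φ : EndA G} (hΦ : Φ ∈ Avg G) (x : redCstar G) : ‖Φ x‖ ≤ ‖x‖ := by
  revert Φ
  apply Avg_induct
  · intro g
    have := norm_conj_le g (x : Bop G)
    rw [← coe_AdL] at this
    exact this
  · intro Φ Ψ a b ha hb hab h1 h2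
    calc ‖(a • Φ + b • Ψ) x‖ = ‖a • Φ x + b • Ψ x‖ := rfl
      _ ≤ ‖a • Φ x‖ + ‖b • Ψ x‖ := norm_add_le _ _
      _ = a * ‖Φ x‖ + b * ‖Ψ x‖ := by
        rw [norm_smul, norm_smul, Real.norm_of_nonneg ha, Real.norm_of_nonneg hb]
      _ ≤ a * ‖x‖ + b * ‖x‖ := by gcongr
      _ = ‖x‖ := by rw [← add_mul, hab, one_mul]

theorem Avg_acc {Φ : EndA G} (hΦ : Φ ∈ Avg G) (x : redCstar G) (ε : ℝ)
    (hx : Accr (ε • (1 : Bop G) - (x : Bop G))) : Accr (ε • (1 : Bop G) - (Φ x : Bop G)) := by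
  revert Φ
  apply Avg_induct
  · intro g
    have := acc_conj hx (lreg g)
    rw [lreg_star, mul_sub, sub_mul, mul_smul_comm, smul_mul_assoc, mul_one, ← lreg_mul, inv_mul_cancel,
      lreg_one, ← coe_AdL] at this
    exact this
  · intro Φ Ψ a b ha hb hab h1 h2
    have e : ε • (1 : Bop G) - ((a • Φ + b • Ψ) x : Bop G) =
      a • (ε • (1 : Bop G) - (Φ x : Bop G)) + b • (ε • (1 : Bop G) - (Ψ x : Bop G)) := by
      rw [coe_comb]
      have : ε • (1 : Bop G) = a • ε • (1 : Bop G) + b • ε • (1 : Bop G) := by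
        rw [← add_smul, hab, one_smul]
      conv_lhs => rw [this]
      rw [smul_sub, smul_sub]; abel
    rw [e]
    exact (h1.smul ha).add (h2.smul hb)

theorem Avg_one {Φ : EndA G} (hΦ : Φ ∈ Avg G) : Φ 1 = 1 := by
  revert Φ
  apply Avg_induct
  · intro g
    rw [AdL_apply, mul_one, ← uu_mul, inv_mul_cancel, uu_one]
  · intro Φ Ψ a b ha hb hab h1 h2
    show a • Φ 1 + b • Ψ 1 = 1
    rw [h1, h2, ← add_smul, hab, one_smul]

variable (G) in
def S0 : Submodule ℂ (redCstar G) := Submodule.span ℂ (uu '' {t : G | t ≠ 1})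

theorem Avg_S0 {Φ : EndA G} (hΦ : Φ ∈ Avg G) {x : redCstar G} (hx : x ∈ S0 G) : Φ x ∈ S0 G := by
  revert Φ
  apply Avg_induct
  · intro g
    have : S0 G ≤ (S0 G).comap (AdL g).toLinearMap := by
      apply Submodule.span_le.2
      rintro _ ⟨t, ht, rfl⟩
      apply Submodule.subset_span
      refine ⟨g⁻¹ * t * g, ?_, ?_⟩
      · intro h
        apply ht
        have : t = g * (g⁻¹ * t * g) * g⁻¹ := by group
        rw [this, h]; group
      · show _ = uu g⁻¹ * uu t * uu g
        rw [uu_mul, uu_mul]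
    exact this hx
  · intro Φ Ψ a b ha hb hab h1 h2
    show a • Φ x + b • Ψ x ∈ _
    rw [← Complex.coe_smul, ← Complex.coe_smul]
    exact (S0 G).add_mem ((S0 G).smul_mem _ h1) ((S0 G).smul_mem _ h2)

theorem propB (hG : IsCstarSimple G) {m : Mean G} (hgood : Good m) {a : redCstar G} (ha : a ∈ S0 G)
    {ε : ℝ} (hε : 0 < ε) {ρ : Bop G →ₗ[ℝ] ℝ} (hρ : IsSt ρ) (h : ∀ g, ε ≤ ρ (AdL g a : Bop G)) : False := by
  obtain ⟨l, hl, hla⟩ := (Finsupp.mem_span_image_iff_linearCombination ℂ).1 ha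
  obtain ⟨μ, hμ⟩ := fact1 hgood hρ
  obtain ⟨g, hg⟩ := propA hG hgood l.support (by
    intro h1
    exact hl h1 rfl)
  have h1 : ε ≤ avg μ ρ hρ (AdL g a : Bop G) := by
    apply μ.ge_of
    intro k
    have := h (g * k)
    rw [← AdL_comp] at this
    show ε ≤ ρ (lreg k⁻¹ * (AdL g a : Bop G) * lreg k)
    rw [← coe_AdL]
    exact this
  have h2 : (AdL g a : Bop G) = ∑ t ∈ l.support, l t • lreg (g⁻¹ * t * g) := by
    rw [← hla, Finsupp.linearCombination_apply, Finsupp.sum, map_sum, AddSubmonoidClass.coe_finset_sum]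
    apply Finset.sum_congr rfl
    intro t _
    rw [map_smul]
    show l t • ((AdL g (uu t) : redCstar G) : Bop G) = _
    rw [coe_AdL, coe_uu, lreg_mul, lreg_mul]
  rw [h2, map_sum, Finset.sum_eq_zero] at h1
  · linarith
  · intro t ht
    exact off_stab hgood (avg_isSt μ ρ hρ) hμ (hg t ht) _

def evA (a : redCstar G) : EndA G →ₗ[ℝ] Bop G :=
  { toFun := fun Φ => (Φ a : Bop G)
    map_add' := fun _ _ => rfl
    map_smul' := fun _ _ => rfl }

theorem evA_apply (a : redCstar G) (Φ : EndA G) : evA a Φ = (Φ a : Bop G) := rfl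

theorem acc_one : Accr (1 : Bop G) := by
  have := acc_star_mul (1 : Bop G)
  rwa [star_one, one_mul] at this

theorem acc_mono {T : Bop G} {δ ε : ℝ} (h : δ < ε) (hT : Accr (δ • (1 : Bop G) - T)) :
    Accr (ε • (1 : Bop G) - T) := by
  have e : ε • (1 : Bop G) - T = (δ • (1 : Bop G) - T) + (ε - δ) • (1 : Bop G) := by
    rw [sub_smul]; abel
  rw [e]
  exact hT.add (acc_one.smul (by linarith))

theorem evA_convex (a : redCstar G) : Convex ℝ (evA a '' Avg G) := by
  rintro _ ⟨Φ, hΦ, rfl⟩ _ ⟨Ψ, hΨ, rfl⟩ r t hr ht hrt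
  refine ⟨r • Φ + t • Ψ, Avg_convex hΦ hΨ hr ht hrt, ?_⟩
  rw [map_add, map_smul, map_smul]

theorem propC (hG : IsCstarSimple G) {m : Mean G} (hgood : Good m) {a : redCstar G} (ha : a ∈ S0 G)
    {ε : ℝ} (hε : 0 < ε) : ∃ Φ ∈ Avg G, Accr (ε • (1 : Bop G) - (Φ a : Bop G)) := by
  by_contra hcon
  push Not at hcon
  obtain ⟨ρ, hρ, hge⟩ := sep_state (evA a '' Avg G) (evA_convex a)
    ⟨evA a (AdL 1), Set.mem_image_of_mem _ (AdL_mem 1)⟩ ε (by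
      rintro _ ⟨Φ, hΦ, rfl⟩ δ hδ hacc
      rw [evA_apply] at hacc
      exact hcon Φ hΦ (acc_mono hδ hacc))
  refine propB hG hgood ha hε hρ (fun g => ?_)
  rw [← evA_apply]
  exact hge _ (Set.mem_image_of_mem _ (AdL_mem g))

theorem propC_list (hG : IsCstarSimple G) {m : Mean G} (hgood : Good m) {a : redCstar G} (ha : a ∈ S0 G)
    {ε : ℝ} (hε : 0 < ε) (l : List ℂ) :
    ∃ Φ ∈ Avg G, ∀ z ∈ l, Accr (ε • (1 : Bop G) - z • (Φ a : Bop G)) := by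
  induction l with
  | nil => exact ⟨AdL 1, AdL_mem 1, by simp⟩
  | cons z l ih =>
    obtain ⟨Φ, hΦ, h⟩ := ih
    obtain ⟨Ψ, hΨ, h'⟩ := propC hG hgood ((S0 G).smul_mem z (Avg_S0 hΦ ha)) hε
    refine ⟨Ψ.comp Φ, Avg_comp hΨ hΦ, ?_⟩
    intro w hw
    have e : ∀ w : ℂ, w • ((Ψ.comp Φ) a : Bop G) = (Ψ (w • Φ a) : Bop G) := by
      intro w; rw [map_smul]; rfl
    rw [e]
    rcases List.mem_cons.1 hw with rfl | hw
    · exact h'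
    · exact Avg_acc hΨ _ _ (h w hw)

theorem propD (hG : IsCstarSimple G) {m : Mean G} (hgood : Good m) {ε : ℝ} (hε : 0 < ε)
    {a : redCstar G} (ha : a ∈ S0 G) : ∃ Φ ∈ Avg G, ‖Φ a‖ ≤ ε := by
  obtain ⟨Φ, hΦ, h⟩ := propC_list hG hgood ha (by linarith : 0 < ε / 8) [1, -1, Complex.I, -Complex.I]
  refine ⟨Φ, hΦ, ?_⟩
  have := norm_bound_of_acc (by linarith : 0 ≤ ε / 8) h
  calc ‖Φ a‖ = ‖(Φ a : Bop G)‖ := rfl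
    _ ≤ _ := this
    _ = ε := by ring

theorem propD_list (hG : IsCstarSimple G) {m : Mean G} (hgood : Good m) {ε : ℝ} (hε : 0 < ε)
    (l : List (redCstar G)) (hl : ∀ a ∈ l, a ∈ S0 G) : ∃ Φ ∈ Avg G, ∀ a ∈ l, ‖Φ a‖ ≤ ε := by
  induction l with
  | nil => exact ⟨AdL 1, AdL_mem 1, by simp⟩
  | cons b l ih =>
    obtain ⟨Φ, hΦ, h⟩ := ih (fun a ha => hl a (List.mem_cons_of_mem _ ha))
    obtain ⟨Ψ, hΨ, h'⟩ := propD hG hgood hε (Avg_S0 hΦ (hl b List.mem_cons_self))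
    refine ⟨Ψ.comp Φ, Avg_comp hΨ hΦ, ?_⟩
    intro w hw
    rcases List.mem_cons.1 hw with rfl | hw
    · exact h'
    · exact (Avg_norm hΨ _).trans (h w hw)

theorem norm_tau_le (a : redCstar G) : ‖tau G a‖ ≤ ‖a‖ := by
  classical
  rw [tau_apply]
  have h1 : ‖(deltaOne (G := G))‖ = 1 := by
    unfold deltaOne
    rw [lp.norm_single (by norm_num)]; simp
  calc ‖((a : Bop G) deltaOne) 1‖ ≤ ‖(a : Bop G) deltaOne‖ := lp.norm_apply_le_norm (by norm_num) _ _
    _ ≤ ‖(a : Bop G)‖ * ‖(deltaOne (G := G))‖ := (a : Bop G).le_opNorm _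
    _ = ‖a‖ := by rw [h1, mul_one]; rfl

theorem S0_add {x y : redCstar G} (hx : x - tau G x • 1 ∈ S0 G) (hy : y - tau G y • 1 ∈ S0 G) :
    x + y - tau G (x + y) • 1 ∈ S0 G := by
  have e : x + y - tau G (x + y) • 1 = (x - tau G x • 1) + (y - tau G y • 1) := by
    rw [map_add, add_smul]; abel
  rw [e]; exact (S0 G).add_mem hx hy

theorem S0_smul {x : redCstar G} (c : ℂ) (hx : x - tau G x • 1 ∈ S0 G) :
    c • x - tau G (c • x) • 1 ∈ S0 G := by
  have e : c • x - tau G (c • x) • 1 = c • (x - tau G x • 1) := by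
    rw [map_smul, smul_sub, smul_assoc]
  rw [e]; exact (S0 G).smul_mem c hx

theorem approx_S0 (a : redCstar G) {ε : ℝ} (hε : 0 < ε) :
    ∃ b ∈ S0 G, ‖a - tau G a • 1 - b‖ ≤ 2 * ε := by
  classical
  obtain ⟨b', hb', hd⟩ := span_uu_dense a ε hε
  refine ⟨b' - tau G b' • 1, ?_, ?_⟩
  · clear hd
    induction hb' using Submodule.span_induction with
    | mem x hx =>
      obtain ⟨g, rfl⟩ := hx
      rw [tau_uu]
      split_ifs with h
      · rw [h, uu_one, one_smul, sub_self]; exact (S0 G).zero_mem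
      · rw [zero_smul, sub_zero]; exact Submodule.subset_span ⟨g, h, rfl⟩
    | zero => simp
    | add x y _ _ hx hy => exact S0_add hx hy
    | smul c x _ hx => exact S0_smul c hx
  · have e : a - tau G a • 1 - (b' - tau G b' • 1) = (a - b') - tau G (a - b') • 1 := by
      rw [map_sub, sub_smul]; abel
    rw [e]
    have h1 : ‖tau G (a - b') • (1 : redCstar G)‖ ≤ ‖a - b'‖ := by
      rw [norm_smul]
      have : ‖(1 : redCstar G)‖ ≤ 1 := by
        have h2 := norm_lreg_le (1 : G)
        rw [lreg_one] at h2
        exact h2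
      calc _ ≤ ‖a - b'‖ * 1 := mul_le_mul (norm_tau_le _) this (norm_nonneg _) (norm_nonneg _)
        _ = _ := mul_one _
    calc _ ≤ _ := norm_sub_le _ _
      _ ≤ 2 * ε := by linarith

theorem propE (hG : IsCstarSimple G) {ε : ℝ} (hε : 0 < ε)
    (s : Finset (redCstar G)) : ∃ Φ ∈ Avg G, ∀ a ∈ s, ‖Φ a - tau G a • 1‖ ≤ ε := by
  obtain ⟨m, h1, h2, h3⟩ := exists_good_mean (G := G)
  have hgood : Good m := ⟨h1, h2, h3⟩
  choose b hb hd using fun a : redCstar G => approx_S0 a (by linarith : 0 < ε / 4)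
  obtain ⟨Φ, hΦ, h⟩ := propD_list hG hgood (by linarith : 0 < ε / 2) (s.toList.map b) (by
    intro x hx
    obtain ⟨a, _, rfl⟩ := List.mem_map.1 hx
    exact hb a)
  refine ⟨Φ, hΦ, ?_⟩
  intro a ha
  have e : Φ a - tau G a • 1 = Φ (a - tau G a • 1 - b a) + Φ (b a) := by
    rw [map_sub, map_sub, map_smul, Avg_one hΦ]; abel
  rw [e]
  have i1 := (Avg_norm hΦ (a - tau G a • 1 - b a)).trans (hd a)
  have i2 := h (b a) (List.mem_map_of_mem (Finset.mem_toList.2 ha))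
  calc _ ≤ _ := norm_add_le _ _
    _ ≤ ε := by linarith

theorem hard_direction (hG : IsCstarSimple G) (φ : WeakDual ℂ (redCstar G)) :
    φ 1 • tau G ∈
      closure (convexHull ℝ {ψ : WeakDual ℂ (redCstar G) | ∃ g : G, ψ = dualAct g φ}) := by
  classical
  choose Φ hΦ hd using fun i : Finset (redCstar G) × ℕ =>
    propE hG (ε := 1 / ((i.2 : ℝ) + 1)) (by positivity) i.1
  let L : EndA G →ₗ[ℝ] WeakDual ℂ (redCstar G) :=
    { toFun := fun Ψ => (WeakDual.toStrongDual φ).comp Ψ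
      map_add' := fun Ψ Θ => by
        refine ContinuousLinearMap.ext fun a => ?_
        exact map_add φ (Ψ a) (Θ a)
      map_smul' := fun c Ψ => by
        refine ContinuousLinearMap.ext fun a => ?_
        show φ (c • Ψ a) = c • φ (Ψ a)
        rw [← Complex.coe_smul, map_smul]; simp }
  have hL : ∀ Ψ a, L Ψ a = φ (Ψ a) := fun _ _ => rfl
  have hmem : ∀ Ψ ∈ Avg G, L Ψ ∈ convexHull ℝ {ψ : WeakDual ℂ (redCstar G) | ∃ g : G, ψ = dualAct g φ} := by
    intro Ψ hΨ
    have := (LinearMap.image_convexHull L (Set.range (AdL (G := G)))).subset ⟨Ψ, hΨ, rfl⟩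
    refine convexHull_mono ?_ this
    rintro _ ⟨_, ⟨g, rfl⟩, rfl⟩
    exact ⟨g, rfl⟩
  refine mem_closure_of_tendsto (f := fun i => L (Φ i)) (b := Filter.atTop) ?_
    (Filter.Eventually.of_forall fun i => hmem _ (hΦ i))
  rw [tendsto_iff_forall_eval_tendsto_topDualPairing]
  intro a
  show Filter.Tendsto (fun i => φ (Φ i a)) Filter.atTop (nhds ((φ 1 • tau G) a))
  have e : (φ 1 • tau G) a = φ (tau G a • 1) := by
    rw [map_smul, smul_eq_mul, mul_comm]; rfl
  rw [e]
  refine ((map_continuous φ).tendsto _).comp ?_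
  rw [Metric.tendsto_atTop]
  intro ε hε
  obtain ⟨n, hn⟩ := exists_nat_one_div_lt hε
  refine ⟨({a}, n), ?_⟩
  rintro ⟨s, k⟩ ⟨h1, h2⟩
  rw [dist_eq_norm]
  refine lt_of_le_of_lt (hd (s, k) a (h1 (Finset.mem_singleton_self a))) (lt_of_le_of_lt ?_ hn)
  have : (n : ℝ) ≤ k := by exact_mod_cast h2
  show 1 / ((k : ℝ) + 1) ≤ _
  gcongr

/-- A discrete group is C*-simple if and only if for every bounded linear functional `φ` on
`C*_λ(G)` the weak* closed convex hull of the `G`-orbit of `φ` contains `φ(1)τ_λ`. -/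
theorem cstarSimple_iff_scaled_trace_in_closed_convex_orbit (G : Type u) [Group G] :
    IsCstarSimple G ↔
      ∀ φ : WeakDual ℂ (redCstar G),
        φ 1 • tau G ∈
          closure (convexHull ℝ {ψ : WeakDual ℂ (redCstar G) | ∃ g : G, ψ = dualAct g φ}) := by
  constructor
  · intro h φ
    exact hard_direction h φ
  · intro h
    exact easy_direction h
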